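/- Let G = ⟨a, b; Rⁿ⟩ be a two-generator one-relator group with torsion (so n > 1 and R is not a proper power in the free group on {a, b}). Then the cyclic subgroups ⟨a⟩ and ⟨b⟩ generated by the images of the two generators are malnormal subgroups of G. -/

import Mathlib

/-- A group is *virtually-ℤ* if it has a finite-index subgroup isomorphic to `ℤ`. -/
def VirtuallyZ (G : Type*) [Group G] : Prop :=
  ∃ H : Subgroup G, H.FiniteIndex ∧ Nonempty (H ≃* Multiplicative ℤ)

/-- A subgroup `M` of `G` is *malnormal* if `g M g⁻¹ ∩ M ≠ 1` implies `g ∈ M`. -/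
def Subgroup.IsMalnormal {G : Type*} [Group G] (M : Subgroup G) : Prop :=
  ∀ g : G, (∃ x : G, x ≠ 1 ∧ x ∈ M ∧ g * x * g⁻¹ ∈ M) → g ∈ M

/-- A group is a *free product of cyclic groups* if it is isomorphic to the free product
(`Monoid.CoprodI`) of a family of cyclic groups; every cyclic group is isomorphic to
`Multiplicative (ZMod m)` for some `m : ℕ` (with `m = 0` giving the infinite cyclic group). -/
def IsFreeProductOfCyclics (G : Type*) [Group G] : Prop :=
  ∃ (ι : Type) (m : ι → ℕ),
    Nonempty (G ≃* Monoid.CoprodI fun i => Multiplicative (ZMod (m i)))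

/-- A group is *freely decomposable* if it is isomorphic to a free product of two
nontrivial groups. -/
def FreelyDecomposable (G : Type*) [Group G] : Prop :=
  ∃ (H K : Type) (gH : Group H) (gK : Group K),
    Nontrivial H ∧ Nontrivial K ∧
      Nonempty (G ≃* (letI := gH; letI := gK; Monoid.Coprod H K))

/-- A group is *freely indecomposable* if it is not isomorphic to a free product of two
nontrivial groups. -/
def FreelyIndecomposable (G : Type*) [Group G] : Prop := ¬ FreelyDecomposable G

/-!
# Malnormality of cyclic subgroups in one-relator groups with torsion

The argument is a Magnus induction on a nonempty cyclically reduced word `L`, with relator `L ^ n`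
and `n ≥ 2`. For all letters `x` and `z` of `L` one proves together that the letters other than `x`
generate a free subgroup `⟨X ∖ x⟩`, that this subgroup is malnormal, and that
`⟨X ∖ x⟩ ∩ ⟨X ∖ z⟩ = ⟨X ∖ {x, z}⟩`.

A weight `φ : X → ℤ` for which `L` has weight zero lifts `L` to a word over `X × ℤ`, each letter
being decorated by the height at which it is read. The group of `L ^ n` then embeds as a retract in
an HNN extension of the group of the lifted relator, whose stable letter `t` shifts the heights.
There `⟨X ∖ x⟩` becomes the trace of `C ⋊ ⟨t⟩`, where `C` is generated by the decorated letters over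
`X ∖ x`, and the three claims descend.

If the lift has more distinct letters than `L`, one concludes by induction, since there are at most
as many letters as the length. If no weight separates two occurrences of a letter, then `L` is a
power of a word with distinct letters; up to a change of basis the relator is a power of a
generator, and the group is a free product of cyclic groups.
-/

namespace OneRelator

section HNN

open HNNExtension HNNExtension.NormalWord

variable {H : Type*} [Group H] {A B C : Subgroup H} {φ : A ≃* B}

/-- The product `t ^ e₁ * h₁ * ⋯ * t ^ eₖ * hₖ` of the syllables `(eᵢ, hᵢ)` in an HNN extension. -/
def syllableProd (φ : A ≃* B) (l : List (ℤˣ × H)) : HNNExtension H A B φ :=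
  (l.map fun s => t ^ (s.1 : ℤ) * of s.2).prod

/-- Britton's condition on a list of syllables: it contains no pinch `t ^ e * h * t ^ (-e)` with
`h` in the associated subgroup of `t ^ e`. -/
abbrev IsReduced (A B : Subgroup H) (l : List (ℤˣ × H)) : Prop :=
  l.IsChain fun s s' => s.2 ∈ toSubgroup A B s.1 → s.1 = s'.1

@[simp] lemma syllableProd_nil : syllableProd φ [] = 1 := rfl

@[simp] lemma syllableProd_cons (s : ℤˣ × H) (l : List (ℤˣ × H)) :
    syllableProd φ (s :: l) = t ^ (s.1 : ℤ) * of s.2 * syllableProd φ l := by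
  simp [syllableProd]

@[simp] lemma syllableProd_append (l l' : List (ℤˣ × H)) :
    syllableProd φ (l ++ l') = syllableProd φ l * syllableProd φ l' := by
  simp [syllableProd]

@[simp] lemma syllableProd_replicate (e : ℤˣ) (m : ℕ) :
    syllableProd φ (List.replicate m (e, (1 : H))) = t ^ ((e : ℤ) * m) := by
  simp [syllableProd, zpow_mul]

lemma exists_isReduced (g : HNNExtension H A B φ) :
    ∃ h l, IsReduced A B l ∧ g = of h * syllableProd φ l := by
  obtain ⟨d⟩ := TransversalPair.nonempty H A B
  let w : NormalWord d := g • NormalWord.empty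
  have hw : w.prod φ = g := by rw [prod_smul, prod_empty, mul_one]
  exact ⟨w.head, w.toList, w.chain, hw.symm⟩

lemma eq_fst_and_head_mem_of_isReduced {h h' : H} {l l' : List (ℤˣ × H)} (hl : IsReduced A B l)
    (hl' : IsReduced A B l') (heq : of h * syllableProd φ l = of h' * syllableProd φ l') :
    l.map Prod.fst = l'.map Prod.fst ∧
      ∀ e ∈ l.head?.map Prod.fst, h⁻¹ * h' ∈ toSubgroup A B (-e) :=
  ReducedWord.map_fst_eq_and_of_prod_eq φ (w₁ := ⟨h, l, hl⟩) (w₂ := ⟨h', l', hl'⟩) heq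

lemma isReduced_of_forall_fst_eq {l : List (ℤˣ × H)} {e : ℤˣ} (h : ∀ s ∈ l, s.1 = e) :
    IsReduced A B l :=
  (List.pairwise_of_forall_mem_list fun s hs s' hs' (_ : s.2 ∈ toSubgroup A B s.1) =>
    (h s hs).trans (h s' hs').symm).isChain

lemma isReduced_append_replicate {l : List (ℤˣ × H)} {e : ℤˣ} {h : H}
    (hl : IsReduced A B (l ++ [(e, h)])) (h' : H) (m : ℕ) :
    IsReduced A B (l ++ (e, h') :: List.replicate m (e, 1)) := by
  rw [IsReduced, List.isChain_append] at hl ⊢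
  refine ⟨hl.1, isReduced_of_forall_fst_eq (e := e) (by simp), fun s hs s' hs' => ?_⟩
  obtain rfl : (e, h') = s' := by simpa using hs'
  exact hl.2.2 s hs (e, h) (by simp)

lemma isReduced_replicate_append {l : List (ℤˣ × H)} {e e' : ℤˣ} {h h' : H}
    (hl : IsReduced A B ((e', h') :: l)) (hh : h ∉ toSubgroup A B (-e')) (m : ℕ) :
    IsReduced A B (List.replicate m (e, 1) ++ (e, h) :: (e', h') :: l) := by
  rw [IsReduced, List.isChain_append]
  refine ⟨isReduced_of_forall_fst_eq (e := e) (by simp),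
    List.isChain_cons_cons.2 ⟨fun hmem => ?_, hl⟩, fun s hs s' hs' _ => ?_⟩
  · by_contra hne
    exact hh ((Int.units_ne_iff_eq_neg.1 hne : e = -e') ▸ hmem)
  · obtain rfl : (e, h) = s' := by simpa using hs'
    rw [List.eq_of_mem_replicate (List.mem_of_mem_getLast? hs)]

/-- The subgroup `D` of the base is respected by the isomorphism `φ` of associated subgroups. -/
def IsCompatible (φ : A ≃* B) (D : Subgroup H) : Prop :=
  ∀ a : A, (a : H) ∈ D ↔ (φ a : H) ∈ D

/-- The subgroup of an HNN extension generated by a subgroup `D` of the base and the stable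
letter. -/
def stableExtension (φ : A ≃* B) (D : Subgroup H) : Subgroup (HNNExtension H A B φ) :=
  Subgroup.closure (of '' (D : Set H) ∪ {t})

lemma of_mem_stableExtension {D : Subgroup H} {d : H} (hd : d ∈ D) :
    of d ∈ stableExtension φ D :=
  Subgroup.subset_closure (Or.inl ⟨d, hd, rfl⟩)

lemma t_mem_stableExtension (D : Subgroup H) : t ∈ stableExtension φ D :=
  Subgroup.subset_closure (Or.inr rfl)

lemma IsCompatible.exists_zpow_mul_of_eq {D : Subgroup H} (hD : IsCompatible φ D) {e : ℤˣ} {h : H}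
    (hh : h ∈ D) (he : h ∈ toSubgroup A B e) :
    ∃ d ∈ D, (t : HNNExtension H A B φ) ^ (e : ℤ) * of h = of d * t ^ (e : ℤ) := by
  rcases Int.units_eq_one_or e with rfl | rfl
  · exact ⟨_, (hD ⟨h, he⟩).1 hh, by simpa using t_mul_of (φ := φ) ⟨h, he⟩⟩
  · exact ⟨φ.symm ⟨h, he⟩, (hD _).2 (by simpa using hh),
      by simpa using inv_t_mul_of (φ := φ) ⟨h, he⟩⟩

/-! ### Subgroups of HNN extensions containing the stable letter -/

/-- The elements of an HNN extension with a reduced form all of whose coefficients lie in `D`. -/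
def HasReducedFormIn (φ : A ≃* B) (D : Subgroup H) (g : HNNExtension H A B φ) : Prop :=
  ∃ h l, IsReduced A B l ∧ h ∈ D ∧ (∀ s ∈ l, s.2 ∈ D) ∧ g = of h * syllableProd φ l

lemma HasReducedFormIn.of_mul {D : Subgroup H} {g : HNNExtension H A B φ}
    (hg : HasReducedFormIn φ D g) {d : H} (hd : d ∈ D) : HasReducedFormIn φ D (of d * g) := by
  obtain ⟨h, l, hl, hh, hlD, rfl⟩ := hg
  exact ⟨d * h, l, hl, D.mul_mem hd hh, hlD, by rw [map_mul, mul_assoc]⟩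

lemma HasReducedFormIn.zpow_mul {D : Subgroup H} (hD : IsCompatible φ D)
    {g : HNNExtension H A B φ} (hg : HasReducedFormIn φ D g) (e : ℤˣ) :
    HasReducedFormIn φ D (t ^ (e : ℤ) * g) := by
  obtain ⟨h, l, hl, hh, hlD, rfl⟩ := hg
  by_cases hred : IsReduced A B ((e, h) :: l)
  · exact ⟨1, (e, h) :: l, hred, D.one_mem, List.forall_mem_cons.2 ⟨hh, hlD⟩, by simp [mul_assoc]⟩
  obtain ⟨f, k, l', rfl, hmem, hne⟩ :
      ∃ f k l', l = (f, k) :: l' ∧ h ∈ toSubgroup A B e ∧ e ≠ f := by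
    cases l with
    | nil => exact absurd (List.isChain_singleton _) hred
    | cons s l' =>
      rw [IsReduced, List.isChain_cons_cons, not_and_or, Classical.not_imp] at hred
      obtain ⟨hmem, hne⟩ := hred.resolve_right (not_not.2 hl)
      exact ⟨s.1, s.2, l', rfl, hmem, hne⟩
  obtain rfl : f = -e := Int.units_ne_iff_eq_neg.1 hne.symm
  obtain ⟨d, hd, hdt⟩ := hD.exists_zpow_mul_of_eq hh hmem
  refine ⟨d * k, l', (List.isChain_cons.1 hl).2, D.mul_mem hd (hlD (-e, k) (by simp)),
    fun s hs => hlD s (by simp [hs]), ?_⟩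
  rw [← mul_assoc, hdt]
  simp [mul_assoc]

lemma IsCompatible.hasReducedFormIn {D : Subgroup H} (hD : IsCompatible φ D)
    {g : HNNExtension H A B φ} (hg : g ∈ stableExtension φ D) : HasReducedFormIn φ D g := by
  induction hg using Subgroup.closure_induction_left with
  | one => exact ⟨1, [], List.isChain_nil, D.one_mem, by simp, by simp⟩
  | mul_left x hx y _ hy =>
    rcases hx with ⟨d, hd, rfl⟩ | rfl
    · exact hy.of_mul hd
    · simpa using hy.zpow_mul hD 1
  | inv_mul_cancel x hx y _ hy =>
    rcases hx with ⟨d, hd, rfl⟩ | rfl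
    · simpa using hy.of_mul (D.inv_mem hd)
    · simpa using hy.zpow_mul hD (-1)

theorem IsCompatible.of_mem_stableExtension_iff {D : Subgroup H} (hD : IsCompatible φ D) {h : H} :
    of h ∈ stableExtension φ D ↔ h ∈ D := by
  refine ⟨fun hh => ?_, of_mem_stableExtension⟩
  obtain ⟨h', l, hl, hh', -, heq⟩ := hD.hasReducedFormIn hh
  obtain rfl : l = [] := by
    simpa using (eq_fst_and_head_mem_of_isReduced (φ := φ) (l := []) List.isChain_nil hl
      (by simpa using heq)).1.symm
  rw [syllableProd_nil, mul_one] at heq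
  rwa [of_injective φ heq]

/-! ### Malnormality in HNN extensions -/

/-- The subgroup `C` of the base lies in both associated subgroups and is normalised by the stable
letter. -/
structure IsStable (φ : A ≃* B) (C : Subgroup H) : Prop where
  le_source : C ≤ A
  le_target : C ≤ B
  isCompatible : IsCompatible φ C

lemma IsStable.le_toSubgroup (hC : IsStable φ C) (e : ℤˣ) : C ≤ toSubgroup A B e := by
  rcases Int.units_eq_one_or e with rfl | rfl
  exacts [hC.le_source, hC.le_target]

lemma IsStable.exists_zpow_mul_of_eq (hC : IsStable φ C) (e : ℤˣ) {c : H} (hc : c ∈ C) :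
    ∃ d ∈ C, (t : HNNExtension H A B φ) ^ (e : ℤ) * of c = of d * t ^ (e : ℤ) :=
  hC.isCompatible.exists_zpow_mul_of_eq hc (hC.le_toSubgroup e hc)

lemma IsStable.mem_stableExtension_iff (hC : IsStable φ C) {g : HNNExtension H A B φ} :
    g ∈ stableExtension φ C ↔ ∃ c ∈ C, ∃ k : ℤ, g = of c * t ^ k := by
  constructor
  · intro hg
    have shift (e : ℤˣ) {c : H} (hc : c ∈ C) (k : ℤ) :
        ∃ d ∈ C, ∃ k' : ℤ, (t : HNNExtension H A B φ) ^ (e : ℤ) * (of c * t ^ k) =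
          of d * t ^ k' := by
      obtain ⟨d, hd, heq⟩ := hC.exists_zpow_mul_of_eq e hc
      exact ⟨d, hd, e + k, by rw [← mul_assoc, heq, mul_assoc, zpow_add]⟩
    induction hg using Subgroup.closure_induction_left with
    | one => exact ⟨1, C.one_mem, 0, by simp⟩
    | mul_left x hx y _ hy =>
      obtain ⟨c, hc, k, rfl⟩ := hy
      rcases hx with ⟨d, hd, rfl⟩ | rfl
      · exact ⟨d * c, C.mul_mem hd hc, k, by rw [map_mul, mul_assoc]⟩
      · simpa using shift 1 hc k
    | inv_mul_cancel x hx y _ hy =>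
      obtain ⟨c, hc, k, rfl⟩ := hy
      rcases hx with ⟨d, hd, rfl⟩ | rfl
      · exact ⟨d⁻¹ * c, C.mul_mem (C.inv_mem hd) hc, k, by rw [map_mul, map_inv, mul_assoc]⟩
      · simpa using shift (-1) hc k
  · rintro ⟨c, hc, k, rfl⟩
    exact mul_mem (of_mem_stableExtension hc) (zpow_mem (t_mem_stableExtension C) k)

/-- The exponent sum of the stable letter. -/
def stableDegree (φ : A ≃* B) : HNNExtension H A B φ →* Multiplicative ℤ :=
  lift 1 (Multiplicative.ofAdd 1) (by simp)

lemma stableDegree_of_mul_zpow (h : H) (k : ℤ) :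
    stableDegree φ (of h * t ^ k) = Multiplicative.ofAdd k := by
  simp [stableDegree, ← ofAdd_zsmul]

lemma zpow_eq_of_semiconjBy {g : HNNExtension H A B φ} {h h' : H} {k k' : ℤ}
    (hg : SemiconjBy g (of h * t ^ k) (of h' * t ^ k')) : k = k' := by
  have := (hg.map (stableDegree φ)).eq
  rw [stableDegree_of_mul_zpow, stableDegree_of_mul_zpow, mul_comm] at this
  simpa using this

lemma exists_units_mul_succ_eq {k : ℤ} (hk : k ≠ 0) :
    ∃ (e : ℤˣ) (m : ℕ), k = e * (m + 1 : ℕ) := by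
  rcases lt_or_gt_of_ne hk with h | h
  · exact ⟨-1, (-k).toNat - 1, by push_cast; simp only [neg_mul, one_mul]; omega⟩
  · exact ⟨1, k.toNat - 1, by push_cast; simp only [one_mul]; omega⟩

lemma IsStable.exists_inv_semiconjBy (hC : IsStable φ C) {g : HNNExtension H A B φ} {c c' : H}
    {k : ℤ} (hc : c ∈ C) (hc' : c' ∈ C) (hg : SemiconjBy g (of c * t ^ k) (of c' * t ^ k)) :
    ∃ d ∈ C, ∃ d' ∈ C, SemiconjBy g (of d * t ^ (-k)) (of d' * t ^ (-k)) := by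
  have inv_eq {c : H} (hc : c ∈ C) : ∃ d ∈ C, (of c * t ^ k)⁻¹ = of d * (t ^ (-k) :
      HNNExtension H A B φ) := by
    obtain ⟨d, hd, j, hj⟩ := hC.mem_stableExtension_iff.1
      (inv_mem (hC.mem_stableExtension_iff.2 ⟨c, hc, k, rfl⟩))
    have hdeg := congrArg (stableDegree φ) hj
    rw [map_inv, stableDegree_of_mul_zpow, stableDegree_of_mul_zpow] at hdeg
    obtain rfl : -k = j := hdeg
    exact ⟨d, hd, hj⟩
  obtain ⟨d, hd, hdc⟩ := inv_eq hc
  obtain ⟨d', hd', hdc'⟩ := inv_eq hc'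
  exact ⟨d, hd, d', hd', hdc ▸ hdc' ▸ hg.inv_right⟩

lemma IsStable.mem_toSubgroup_of_semiconjBy (hC : IsStable φ C) {e : ℤˣ} {m : ℕ} {h c c' : H}
    (hc : c ∈ C) (hc' : c' ∈ C)
    (hh : SemiconjBy (of h : HNNExtension H A B φ) (of c * t ^ ((e : ℤ) * (m + 1 : ℕ)))
      (of c' * t ^ ((e : ℤ) * (m + 1 : ℕ)))) : h ∈ toSubgroup A B (-e) := by
  have hword : of (h * c) * syllableProd φ (List.replicate (m + 1) (e, 1)) =
      of c' * syllableProd φ (List.replicate m (e, 1) ++ [(e, h)]) := by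
    simp only [syllableProd_append, syllableProd_replicate, syllableProd_cons, syllableProd_nil,
      map_mul, mul_one, mul_assoc, hh.eq]
    simp only [Nat.cast_add_one, mul_add, mul_one, zpow_add, mul_assoc]
  have hmem := (eq_fst_and_head_mem_of_isReduced (isReduced_of_forall_fst_eq (e := e) (by simp))
    (isReduced_of_forall_fst_eq (e := e) (by simp +contextual [or_imp])) hword).2 e
    (by simp [List.replicate_succ])
  rw [mul_inv_rev, mul_assoc] at hmem
  rwa [Subgroup.mul_mem_cancel_left _ (inv_mem (hC.le_toSubgroup _ hc)),
    Subgroup.mul_mem_cancel_right _ (hC.le_toSubgroup _ hc'), inv_mem_iff] at hmem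

omit [Group H] in
lemma head?_map_fst_append_cons {l l' : List (ℤˣ × H)} {s : ℤˣ × H} {e : ℤˣ} {h h' : H}
    (hl : l ++ [(e, h)] = s :: l') (r : List (ℤˣ × H)) :
    s.1 ∈ (l ++ (e, h') :: r).head?.map Prod.fst := by
  cases l with
  | nil =>
    obtain ⟨rfl, -⟩ := List.cons.inj hl
    rfl
  | cons =>
    obtain ⟨rfl, -⟩ := List.cons.inj hl
    rfl

lemma inv_mul_mul_mem_toSubgroup_of_semiconjBy {h c c' : H} {s : ℤˣ × H} {l : List (ℤˣ × H)}
    (hl : IsReduced A B (s :: l))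
    (hg : SemiconjBy (of h * syllableProd φ (s :: l)) (of c) (of c')) :
    h⁻¹ * c' * h ∈ toSubgroup A B (-s.1) := by
  obtain ⟨l₀, ⟨e, k⟩, hlast⟩ : ∃ l₀ y, l₀ ++ [y] = s :: l :=
    ⟨_, _, List.dropLast_append_getLast (List.cons_ne_nil s l)⟩
  have hword : of h * syllableProd φ (l₀ ++ [(e, k * c)]) =
      of (c' * h) * syllableProd φ (s :: l) := by
    rw [map_mul, mul_assoc, ← hg.eq, ← hlast]
    simp [mul_assoc]
  have hmem := (eq_fst_and_head_mem_of_isReduced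
    (isReduced_append_replicate (hlast ▸ hl) (k * c) 0) hl hword).2 s.1
    (head?_map_fst_append_cons hlast _)
  rwa [← mul_assoc] at hmem

lemma IsStable.head_mem_toSubgroup_of_semiconjBy_zpow (hC : IsStable φ C) {e : ℤˣ} {m : ℕ}
    {h k c c' : H} {s : ℤˣ × H} {l l₀ : List (ℤˣ × H)} (hl : IsReduced A B (s :: l))
    (hlast : l₀ ++ [(e, k)] = s :: l) (hc' : c' ∈ C)
    (hg : SemiconjBy (of h * syllableProd φ (s :: l)) (of c * t ^ ((e : ℤ) * (m + 1 : ℕ)))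
      (of c' * t ^ ((e : ℤ) * (m + 1 : ℕ)))) : h ∈ toSubgroup A B (-s.1) := by
  by_contra hh
  have hword : of h * syllableProd φ (l₀ ++ (e, k * c) :: List.replicate (m + 1) (e, 1)) =
      of c' * syllableProd φ (List.replicate m (e, 1) ++ (e, h) :: s :: l) := by
    calc of h * syllableProd φ (l₀ ++ (e, k * c) :: List.replicate (m + 1) (e, 1))
        = of h * syllableProd φ (s :: l) * (of c * t ^ ((e : ℤ) * (m + 1 : ℕ))) := by
          rw [← hlast]
          simp only [syllableProd_append, syllableProd_cons, syllableProd_replicate,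
            syllableProd_nil, map_mul, mul_one, mul_assoc]
      _ = of c' * syllableProd φ (List.replicate m (e, 1) ++ (e, h) :: s :: l) := by
          rw [hg.eq, syllableProd_append, syllableProd_replicate, syllableProd_cons (e, h),
            Nat.cast_add_one, mul_add, mul_one, zpow_add]
          simp only [mul_assoc]
  have hmem := (eq_fst_and_head_mem_of_isReduced (isReduced_append_replicate (hlast ▸ hl) _ _)
    (isReduced_replicate_append hl hh m) hword).2 s.1 (head?_map_fst_append_cons hlast _)
  rw [Subgroup.mul_mem_cancel_right _ (hC.le_toSubgroup _ hc'), inv_mem_iff] at hmem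
  exact hh hmem

lemma IsStable.head_mem_toSubgroup (hC : IsStable φ C) (hA : A.IsMalnormal) (hB : B.IsMalnormal)
    {h : H} {s : ℤˣ × H} {l : List (ℤˣ × H)} {u v : HNNExtension H A B φ}
    (hl : IsReduced A B (s :: l)) (hu : u ∈ stableExtension φ C) (hv : v ∈ stableExtension φ C)
    (hu1 : u ≠ 1) (hg : SemiconjBy (of h * syllableProd φ (s :: l)) u v) :
    h ∈ toSubgroup A B (-s.1) := by
  obtain ⟨c, hc, k, rfl⟩ := hC.mem_stableExtension_iff.1 hu
  obtain ⟨c', hc', k', rfl⟩ := hC.mem_stableExtension_iff.1 hv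
  obtain rfl := zpow_eq_of_semiconjBy hg
  rcases eq_or_ne k 0 with rfl | hk
  · rw [zpow_zero, mul_one, mul_one] at hg
    rw [zpow_zero, mul_one] at hu1
    have hmal (e : ℤˣ) : (toSubgroup A B e).IsMalnormal := by
      rcases Int.units_eq_one_or e with rfl | rfl
      exacts [hA, hB]
    have hc'1 : c' ≠ 1 := by
      rintro rfl
      exact hu1 (by simpa using hg.eq)
    have hmem := inv_mul_mul_mem_toSubgroup_of_semiconjBy hl hg
    exact inv_mem_iff.1 (hmal _ h⁻¹ ⟨c', hc'1, hC.le_toSubgroup _ hc', by simpa using hmem⟩)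
  · obtain ⟨e, m, rfl⟩ := exists_units_mul_succ_eq hk
    obtain ⟨l₀, ⟨f, k⟩, hlast⟩ : ∃ l₀ y, l₀ ++ [y] = s :: l :=
      ⟨_, _, List.dropLast_append_getLast (List.cons_ne_nil s l)⟩
    rcases eq_or_ne f e with rfl | hne
    · exact hC.head_mem_toSubgroup_of_semiconjBy_zpow hl hlast hc' hg
    · obtain ⟨d, -, d', hd', hinv⟩ := hC.exists_inv_semiconjBy hc hc' hg
      rw [Int.units_ne_iff_eq_neg.1 hne] at hlast
      exact hC.head_mem_toSubgroup_of_semiconjBy_zpow hl hlast (m := m) hd' (by simpa using hinv)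

lemma IsStable.mem_of_semiconjBy (hC : IsStable φ C) (hmal : C.IsMalnormal)
    (hmax : ∀ K : Set H, (∀ h ∈ K, ∃ ha : h ∈ A, (φ ⟨h, ha⟩ : H) ∈ K) → K ⊆ C)
    {h : H} {u v : HNNExtension H A B φ} (hu : u ∈ stableExtension φ C)
    (hv : v ∈ stableExtension φ C) (hu1 : u ≠ 1) (hg : SemiconjBy (of h) u v) : h ∈ C := by
  obtain ⟨c, hc, k, rfl⟩ := hC.mem_stableExtension_iff.1 hu
  obtain ⟨c', hc', k', rfl⟩ := hC.mem_stableExtension_iff.1 hv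
  obtain rfl := zpow_eq_of_semiconjBy hg
  rcases eq_or_ne k 0 with rfl | hk
  · rw [zpow_zero, mul_one, mul_one] at hg
    rw [zpow_zero, mul_one] at hu1
    have hconj : h * c * h⁻¹ = c' :=
      mul_inv_eq_of_eq_mul (of_injective φ (by simpa using hg.eq))
    exact hmal h ⟨c, fun hc1 => hu1 (by rw [hc1, map_one]), hc, hconj ▸ hc'⟩
  refine hmax {h | ∃ c ∈ C, ∃ c' ∈ C, SemiconjBy (of h : HNNExtension H A B φ) (of c * t ^ k)
    (of c' * t ^ k)} ?_ ⟨c, hc, c', hc', hg⟩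
  rintro h ⟨c, hc, c', hc', hg⟩
  have hA : h ∈ A := by
    obtain ⟨e, m, rfl⟩ := exists_units_mul_succ_eq hk
    obtain ⟨d, hd, d', hd', hinv⟩ := hC.exists_inv_semiconjBy hc hc' hg
    rcases Int.units_eq_one_or e with rfl | rfl
    · exact hC.mem_toSubgroup_of_semiconjBy (e := -1) (m := m) hd hd' (by simpa using hinv)
    · exact hC.mem_toSubgroup_of_semiconjBy (e := -1) hc hc' hg
  have conj_t {c : H} (hc : c ∈ C) : ∃ d ∈ C, SemiconjBy (t : HNNExtension H A B φ)
      (of c * t ^ k) (of d * t ^ k) := by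
    obtain ⟨d, hd, hdt⟩ := hC.exists_zpow_mul_of_eq 1 hc
    have ht : SemiconjBy (t : HNNExtension H A B φ) (of c) (of d) := by
      simpa [SemiconjBy] using hdt
    exact ⟨d, hd, ht.mul_right (SemiconjBy.zpow_right (Commute.refl t) k)⟩
  obtain ⟨d, hd, hdt⟩ := conj_t hc
  obtain ⟨d', hd', hdt'⟩ := conj_t hc'
  refine ⟨hA, d, hd, d', hd', ?_⟩
  rw [equiv_eq_conj (φ := φ) ⟨h, hA⟩]
  exact (hdt'.mul_left hg).mul_left hdt.inv_symm_left

theorem IsStable.isMalnormal_stableExtension (hC : IsStable φ C) (hA : A.IsMalnormal)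
    (hB : B.IsMalnormal) (hmal : C.IsMalnormal)
    (hmax : ∀ K : Set H, (∀ h ∈ K, ∃ ha : h ∈ A, (φ ⟨h, ha⟩ : H) ∈ K) → K ⊆ C) :
    (stableExtension φ C).IsMalnormal := by
  rintro g ⟨u, hu1, hu, hv⟩
  obtain ⟨h, l, hl, rfl⟩ := exists_isReduced g
  have hg := SemiconjBy.conj_mk (of h * syllableProd φ l) u
  generalize of h * syllableProd φ l * u * (of h * syllableProd φ l)⁻¹ = v at hv hg
  induction l generalizing h v with
  | nil =>
    rw [syllableProd_nil, mul_one] at hg ⊢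
    exact of_mem_stableExtension (hC.mem_of_semiconjBy hmal hmax hu hv hu1 hg)
  | cons s l ih =>
    obtain ⟨a, ha⟩ : ∃ a, (of h : HNNExtension H A B φ) * t ^ (s.1 : ℤ) = t ^ (s.1 : ℤ) * of a := by
      have hh := hC.head_mem_toSubgroup hA hB hl hu hv hu1 hg
      rcases Int.units_eq_one_or s.1 with hs | hs <;> rw [hs] at hh ⊢
      · exact ⟨_, by simpa using of_mul_t (φ := φ) ⟨h, hh⟩⟩
      · exact ⟨_, by simpa using of_mul_inv_t (φ := φ) ⟨h, hh⟩⟩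
    have hword : of h * syllableProd φ (s :: l) =
        t ^ (s.1 : ℤ) * (of (a * s.2) * syllableProd φ l) := by
      rw [syllableProd_cons, map_mul, ← mul_assoc, ← mul_assoc, ha]
      simp only [mul_assoc]
    have ht := zpow_mem (t_mem_stableExtension (φ := φ) C) (s.1 : ℤ)
    rw [hword] at hg ⊢
    have hg' := (SemiconjBy.conj_mk (t ^ (s.1 : ℤ))⁻¹ v).mul_left hg
    rw [inv_mul_cancel_left] at hg'
    exact mul_mem ht (ih _ (List.isChain_cons.1 hl).2 _
      (mul_mem (mul_mem (inv_mem ht) hv) (by simpa using ht)) hg')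

end HNN

/-! ### Malnormality in free products -/

section FreeProduct

open Monoid

lemma isMalnormal_comap {G E : Type*} [Group G] [Group E] {f : G →* E} (hf : Function.Injective f)
    {M : Subgroup E} (hM : M.IsMalnormal) : (M.comap f).IsMalnormal := by
  rintro g ⟨x, hx1, hx, hg⟩
  exact hM (f g) ⟨f x, (map_ne_one_iff f hf).2 hx1, hx, by simpa using hg⟩

lemma isMalnormal_map_equiv {G E : Type*} [Group G] [Group E] (e : G ≃* E) {M : Subgroup G}
    (hM : M.IsMalnormal) : (M.map e.toMonoidHom).IsMalnormal := by
  rw [Subgroup.map_equiv_eq_comap_symm']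
  exact isMalnormal_comap e.symm.injective hM

variable {ι : Type*} {G : ι → Type*} [∀ i, Group (G i)]

/-- The subgroup of a free product generated by the factors with index in `J`. -/
def factorsSubgroup (G : ι → Type*) [∀ i, Group (G i)] (J : Set ι) : Subgroup (CoprodI G) :=
  (CoprodI.lift fun j : J => (CoprodI.of : G j →* CoprodI G)).range

lemma of_mem_factorsSubgroup {J : Set ι} {i : ι} (hi : i ∈ J) (a : G i) :
    CoprodI.of a ∈ factorsSubgroup G J :=
  ⟨CoprodI.of (i := ⟨i, hi⟩) a, CoprodI.lift_of _ _⟩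

lemma fst_mem_of_prod_mem_factorsSubgroup {J : Set ι} {w : CoprodI.Word G}
    (hw : w.prod ∈ factorsSubgroup G J) {s : Σ i, G i} (hs : s ∈ w.toList) : s.1 ∈ J := by
  classical
  obtain ⟨c, hc⟩ := hw
  obtain rfl : CoprodI.Word.equiv (CoprodI.lift (fun j : J => (CoprodI.of : G j →* _)) c) = w := by
    rw [hc]
    exact CoprodI.Word.equiv.apply_symm_apply w
  clear hc
  induction c using CoprodI.induction_left with
  | one =>
    rw [map_one] at hs
    exact absurd hs List.not_mem_nil
  | @mul j a c ih =>
    rw [map_mul, CoprodI.lift_of] at hs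
    by_contra hsJ
    have hne : s.1 ≠ j := fun h => hsJ (h ▸ j.2)
    refine hsJ (ih ((CoprodI.Word.mem_smul_iff_of_ne hne (m₁ := s.2) (m₂ := a)).1 ?_))
    convert hs using 1
    exact congrArg _ (mul_smul _ _ _).symm

lemma exists_neWord_prod_eq {g : CoprodI G} (hg : g ≠ 1) :
    ∃ i j, ∃ w : CoprodI.NeWord G i j, w.prod = g := by
  classical
  obtain ⟨i, j, w, hw⟩ := CoprodI.NeWord.of_word (CoprodI.Word.equiv g) fun h =>
    hg (CoprodI.Word.equiv.injective (h.trans (CoprodI.Word.equiv.apply_symm_apply _).symm))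
  exact ⟨i, j, w, by rw [CoprodI.NeWord.prod, hw]; exact CoprodI.Word.equiv.symm_apply_apply g⟩

lemma inv_mul_mul_notMem_factorsSubgroup {J : Set ι} {i j : ι} (w : CoprodI.NeWord G i j)
    (hi : i ∉ J) {x : CoprodI G} (hx : x ∈ factorsSubgroup G J) (hx1 : x ≠ 1) :
    w.prod⁻¹ * x * w.prod ∉ factorsSubgroup G J := by
  intro hconj
  obtain ⟨p, q, v, rfl⟩ := exists_neWord_prod_eq hx1
  have hp : p ∈ J := fst_mem_of_prod_mem_factorsSubgroup (w := v.toWord) hx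
    (s := ⟨p, v.head⟩) (List.mem_of_mem_head? v.toList_head?)
  have hq : q ∈ J := fst_mem_of_prod_mem_factorsSubgroup (w := v.toWord) hx
    (s := ⟨q, v.last⟩) (List.mem_of_mem_getLast? v.toList_getLast?)
  let u := (w.inv.append (fun h => hi (h ▸ hp)) v).append (fun h : q = i => hi (h ▸ hq)) w
  have hu : u.prod ∈ factorsSubgroup G J := by
    simpa only [u, CoprodI.NeWord.append_prod, CoprodI.NeWord.inv_prod] using hconj
  exact hi (fst_mem_of_prod_mem_factorsSubgroup hu (s := ⟨i, w.head⟩)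
    (List.mem_append_right _ (List.mem_of_mem_head? w.toList_head?)))

theorem isMalnormal_factorsSubgroup (J : Set ι) : (factorsSubgroup G J).IsMalnormal := by
  classical
  suffices key : ∀ w : CoprodI.Word G, ∀ x ∈ factorsSubgroup G J, x ≠ 1 →
      w.prod⁻¹ * x * w.prod ∈ factorsSubgroup G J → w.prod ∈ factorsSubgroup G J by
    rintro g ⟨x, hx1, hx, hg⟩
    have hw : (CoprodI.Word.equiv g⁻¹).prod = g⁻¹ := CoprodI.Word.equiv.symm_apply_apply g⁻¹
    exact inv_mem_iff.1 (hw ▸ key (CoprodI.Word.equiv g⁻¹) x hx hx1 (by rwa [hw, inv_inv]))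
  intro w
  induction w using CoprodI.Word.consRecOn with
  | empty => simp [one_mem]
  | cons i m w hw hm ih =>
    intro x hx hx1 hconj
    by_cases hi : i ∈ J
    · have hmem := of_mem_factorsSubgroup hi m
      rw [CoprodI.Word.prod_cons] at hconj ⊢
      refine mul_mem hmem (ih ((CoprodI.of m)⁻¹ * x * CoprodI.of m)
        (mul_mem (mul_mem (inv_mem hmem) hx) hmem) (fun h => hx1 ?_) ?_)
      · rwa [mul_assoc, inv_mul_eq_one, right_eq_mul] at h
      · simpa [mul_assoc] using hconj
    · obtain ⟨a, b, v, hv⟩ := CoprodI.NeWord.of_word (CoprodI.Word.cons m w hw hm)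
        (fun h => List.cons_ne_nil _ _ (congrArg CoprodI.Word.toList h))
      obtain rfl : a = i := by
        have := v.toList_head?.symm.trans (congrArg (fun w => w.toList.head?) hv)
        exact congrArg Sigma.fst (Option.some.inj this)
      rw [← hv] at hconj
      exact absurd hconj (inv_mul_mul_notMem_factorsSubgroup v hi hx hx1)

/-- The elements `c x` are independent cyclic generators: the group is the free product of the
cyclic subgroups that they generate. -/
def IsCyclicBasis {X G : Type*} [Group G] (c : X → G) : Prop :=
  Function.Bijective (CoprodI.lift fun x => (Subgroup.zpowers (c x)).subtype)

lemma isCyclicBasis_of_splitting {X G : Type*} [Group G] {c : X → G}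
    (hc : Subgroup.closure (Set.range c) = ⊤)
    (θ : G →* CoprodI fun x => Subgroup.zpowers (c x))
    (hθ : ∀ x, θ (c x) = CoprodI.of ⟨c x, Subgroup.mem_zpowers (c x)⟩) : IsCyclicBasis c := by
  have hleft : θ.comp (CoprodI.lift fun x => (Subgroup.zpowers (c x)).subtype) = .id _ := by
    ext x ⟨_, k, rfl⟩
    have hpow : (⟨c x ^ k, k, rfl⟩ : Subgroup.zpowers (c x)) =
        ⟨c x, Subgroup.mem_zpowers (c x)⟩ ^ k := rfl
    simp [hθ, hpow]
  constructor
  · exact Function.LeftInverse.injective (g := θ) fun y => DFunLike.congr_fun hleft y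
  · rw [← MonoidHom.range_eq_top, ← top_le_iff, ← hc, Subgroup.closure_le]
    rintro _ ⟨x, rfl⟩
    exact ⟨CoprodI.of ⟨c x, Subgroup.mem_zpowers (c x)⟩, CoprodI.lift_of _ _⟩

theorem IsCyclicBasis.isMalnormal_closure_image {X G : Type*} [Group G] {c : X → G}
    (hc : IsCyclicBasis c) (Y : Set X) : (Subgroup.closure (c '' Y)).IsMalnormal := by
  have hmap : (factorsSubgroup (fun x => Subgroup.zpowers (c x)) Y).map
      (CoprodI.lift fun x => (Subgroup.zpowers (c x)).subtype) = Subgroup.closure (c '' Y) := by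
    have hcomp : (CoprodI.lift fun x => (Subgroup.zpowers (c x)).subtype).comp
        (CoprodI.lift fun y : Y => CoprodI.of) =
        CoprodI.lift fun y : Y => (Subgroup.zpowers (c y)).subtype := by
      ext
      simp
    rw [factorsSubgroup, MonoidHom.map_range, hcomp, CoprodI.range_eq_iSup]
    simp only [Subgroup.range_subtype, Subgroup.zpowers_eq_closure, ← Subgroup.closure_iUnion]
    congr 1
    ext
    simp [eq_comm]
  rw [← hmap]
  exact isMalnormal_map_equiv (MulEquiv.ofBijective _ hc) (isMalnormal_factorsSubgroup Y)

end FreeProduct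

/-! ### Magnus subgroups -/

section Letters

variable {X X' : Type*}

/-- The subgroup of a free group generated by a set of letters. -/
def lettersSubgroup (Y : Set X) : Subgroup (FreeGroup X) :=
  Subgroup.closure (FreeGroup.of '' Y)

lemma lettersSubgroup_mono {Y Z : Set X} (h : Y ⊆ Z) : lettersSubgroup Y ≤ lettersSubgroup Z :=
  Subgroup.closure_mono (Set.image_mono h)

lemma of_mem_lettersSubgroup {Y : Set X} {x : X} (hx : x ∈ Y) :
    FreeGroup.of x ∈ lettersSubgroup Y :=
  Subgroup.subset_closure ⟨x, hx, rfl⟩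

lemma lettersSubgroup_le_iff {Y : Set X} {M : Subgroup (FreeGroup X)} :
    lettersSubgroup Y ≤ M ↔ ∀ y ∈ Y, FreeGroup.of y ∈ M := by
  rw [lettersSubgroup, Subgroup.closure_le, Set.image_subset_iff]
  rfl

lemma hom_eq_of_mem_lettersSubgroup {K : Type*} [Group K] {Y : Set X} {θ ψ : FreeGroup X →* K}
    (h : ∀ y ∈ Y, θ (FreeGroup.of y) = ψ (FreeGroup.of y)) {w : FreeGroup X}
    (hw : w ∈ lettersSubgroup Y) : θ w = ψ w :=
  lettersSubgroup_le_iff (M := θ.eqLocus ψ).2 h hw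

lemma map_lettersSubgroup (f : X → X') (Y : Set X) :
    (lettersSubgroup Y).map (FreeGroup.map f) = lettersSubgroup (f '' Y) := by
  simp only [lettersSubgroup, MonoidHom.map_closure, Set.image_image, FreeGroup.map.of]

lemma map_mem_lettersSubgroup_image_iff (e : X ≃ X') {Y : Set X} {w : FreeGroup X} :
    FreeGroup.map e w ∈ lettersSubgroup (e '' Y) ↔ w ∈ lettersSubgroup Y := by
  rw [← map_lettersSubgroup]
  exact Subgroup.mem_map_iff_mem (FreeGroup.freeGroupCongr e).injective

lemma lettersSubgroup_inf_le (Y Z : Set X) :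
    lettersSubgroup Y ⊓ lettersSubgroup Z ≤ lettersSubgroup (Y ∩ Z) := by
  classical
  let ρ : FreeGroup X →* FreeGroup X := FreeGroup.lift fun x => if x ∈ Z then FreeGroup.of x else 1
  have hρ {w : FreeGroup X} (hw : w ∈ lettersSubgroup Z) : ρ w = w :=
    hom_eq_of_mem_lettersSubgroup (ψ := MonoidHom.id _) (fun x hx => by simp [ρ, hx]) hw
  have hmap : lettersSubgroup Y ≤ (lettersSubgroup (Y ∩ Z)).comap ρ := by
    refine lettersSubgroup_le_iff.2 fun x hx => ?_
    by_cases hxZ : x ∈ Z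
    · simpa [ρ, hxZ] using of_mem_lettersSubgroup (Set.mem_inter hx hxZ)
    · simp [ρ, hxZ]
  rintro w ⟨hY, hZ⟩
  rw [← hρ hZ]
  exact hmap hY

lemma isMalnormal_lettersSubgroup (Y : Set X) : (lettersSubgroup Y).IsMalnormal :=
  IsCyclicBasis.isMalnormal_closure_image
    (isCyclicBasis_of_splitting (FreeGroup.closure_range_of X)
      (FreeGroup.lift fun x => Monoid.CoprodI.of
        (M := fun x => Subgroup.zpowers (FreeGroup.of x)) ⟨FreeGroup.of x, _⟩)
      fun _ => FreeGroup.lift_apply_of) Y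

end Letters

section Magnus

variable {X : Type*} {rels : Set (FreeGroup X)} {V Y : Set X}

/-- The subgroup of a group with presentation `⟨X; rels⟩` generated by the image of `Y ⊆ X`. -/
def magnusSubgroup (rels : Set (FreeGroup X)) (Y : Set X) : Subgroup (PresentedGroup rels) :=
  (lettersSubgroup Y).map (PresentedGroup.mk rels)

lemma magnusSubgroup_mono {Z : Set X} (h : Y ⊆ Z) :
    magnusSubgroup rels Y ≤ magnusSubgroup rels Z :=
  Subgroup.map_mono (lettersSubgroup_mono h)

lemma mk_mem_magnusSubgroup {w : FreeGroup X} (hw : w ∈ lettersSubgroup Y) :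
    PresentedGroup.mk rels w ∈ magnusSubgroup rels Y :=
  ⟨w, hw, rfl⟩

/-- The presentation `⟨X; rels⟩` behaves, relative to a set `V` of letters, as Magnus' theory
predicts for a one-relator group with torsion in which `V` is the set of letters of the cyclically
reduced relator. -/
structure IsMagnus (rels : Set (FreeGroup X)) (V : Set X) : Prop where
  injOn : ∀ ⦃Y : Set X⦄, ¬V ⊆ Y → Set.InjOn (PresentedGroup.mk rels) (lettersSubgroup Y)
  isMalnormal : ∀ ⦃Y : Set X⦄, ¬V ⊆ Y → (magnusSubgroup rels Y).IsMalnormal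
  inf_le : ∀ ⦃Y Z : Set X⦄, ¬V ⊆ Y → ¬V ⊆ Z →
    magnusSubgroup rels Y ⊓ magnusSubgroup rels Z ≤ magnusSubgroup rels (Y ∩ Z)

lemma exists_subset_compl_singleton (h : ¬V ⊆ Y) : ∃ x ∈ V, Y ⊆ {x}ᶜ := by
  obtain ⟨x, hxV, hxY⟩ := Set.not_subset.1 h
  exact ⟨x, hxV, Set.subset_compl_singleton_iff.2 hxY⟩

lemma mk_mem_magnusSubgroup_iff {Z : Set X}
    (hZ : Set.InjOn (PresentedGroup.mk rels) (lettersSubgroup Z)) (hYZ : Y ⊆ Z) {w : FreeGroup X}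
    (hw : w ∈ lettersSubgroup Z) :
    PresentedGroup.mk rels w ∈ magnusSubgroup rels Y ↔ w ∈ lettersSubgroup Y := by
  refine ⟨?_, mk_mem_magnusSubgroup⟩
  rintro ⟨v, hv, hvw⟩
  rwa [← hZ (lettersSubgroup_mono hYZ hv) hw hvw]

lemma isMalnormal_magnusSubgroup_of_subset {Z : Set X}
    (hinj : Set.InjOn (PresentedGroup.mk rels) (lettersSubgroup Z))
    (hmal : (magnusSubgroup rels Z).IsMalnormal) (hYZ : Y ⊆ Z) :
    (magnusSubgroup rels Y).IsMalnormal := by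
  rintro g ⟨_, hx1, ⟨w, hw, rfl⟩, hgw⟩
  have hwZ := lettersSubgroup_mono hYZ hw
  obtain ⟨v, hv, rfl⟩ := hmal g
    ⟨_, hx1, mk_mem_magnusSubgroup hwZ, magnusSubgroup_mono hYZ hgw⟩
  simp only [← map_mul, ← map_inv] at hgw
  rw [mk_mem_magnusSubgroup_iff hinj hYZ (mul_mem (mul_mem hv hwZ) (inv_mem hv))] at hgw
  refine mk_mem_magnusSubgroup (isMalnormal_lettersSubgroup Y v ⟨w, ?_, hw, hgw⟩)
  exact ne_of_apply_ne _ (hx1.trans_eq (map_one _).symm)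

lemma IsMagnus.of_compl_singleton
    (hinj : ∀ x ∈ V, Set.InjOn (PresentedGroup.mk rels) (lettersSubgroup {x}ᶜ))
    (hmal : ∀ x ∈ V, (magnusSubgroup rels {x}ᶜ).IsMalnormal)
    (hinf : ∀ x ∈ V, ∀ z ∈ V, x ≠ z →
      magnusSubgroup rels {x}ᶜ ⊓ magnusSubgroup rels {z}ᶜ ≤ magnusSubgroup rels ({x}ᶜ ∩ {z}ᶜ)) :
    IsMagnus rels V where
  injOn Y hY := by
    obtain ⟨x, hx, hYx⟩ := exists_subset_compl_singleton hY
    exact (hinj x hx).mono (lettersSubgroup_mono hYx)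
  isMalnormal Y hY := by
    obtain ⟨x, hx, hYx⟩ := exists_subset_compl_singleton hY
    exact isMalnormal_magnusSubgroup_of_subset (hinj x hx) (hmal x hx) hYx
  inf_le Y Z hY hZ := by
    obtain ⟨x, hx, hYx⟩ := exists_subset_compl_singleton hY
    obtain ⟨z, hz, hZz⟩ := exists_subset_compl_singleton hZ
    rintro g ⟨hgY : g ∈ magnusSubgroup rels Y, hgZ : g ∈ magnusSubgroup rels Z⟩
    obtain ⟨v, ⟨hvx, hvz⟩, rfl⟩ :
        ∃ v, (v ∈ lettersSubgroup {x}ᶜ ∧ v ∈ lettersSubgroup {z}ᶜ) ∧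
          PresentedGroup.mk rels v = g := by
      obtain rfl | hxz := eq_or_ne x z
      · obtain ⟨v, hv, rfl⟩ := magnusSubgroup_mono hYx hgY
        exact ⟨v, ⟨hv, hv⟩, rfl⟩
      · obtain ⟨v, hv, rfl⟩ := hinf x hx z hz hxz
          ⟨magnusSubgroup_mono hYx hgY, magnusSubgroup_mono hZz hgZ⟩
        exact ⟨v, ⟨lettersSubgroup_mono Set.inter_subset_left hv,
          lettersSubgroup_mono Set.inter_subset_right hv⟩, rfl⟩
    rw [mk_mem_magnusSubgroup_iff (hinj x hx) hYx hvx] at hgY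
    rw [mk_mem_magnusSubgroup_iff (hinj z hz) hZz hvz] at hgZ
    exact mk_mem_magnusSubgroup (lettersSubgroup_inf_le Y Z ⟨hgY, hgZ⟩)

namespace IsMagnus

variable {A : Set X} (H : IsMagnus rels V) (e : X ≃ X) (hA : ¬V ⊆ A) (hB : ¬V ⊆ e '' A)
include H

/-- The Freiheitssatz as an isomorphism: a Magnus subgroup is free on its letters. -/
noncomputable def lettersEquiv (hY : ¬V ⊆ Y) : lettersSubgroup Y ≃* magnusSubgroup rels Y :=
  MulEquiv.ofBijective ((PresentedGroup.mk rels).subgroupMap (lettersSubgroup Y))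
    ⟨fun w v h => Subtype.ext (H.injOn hY w.2 v.2 (congrArg Subtype.val h)),
      MonoidHom.subgroupMap_surjective _ _⟩

/-- The isomorphism between the Magnus subgroups of `A` and `e '' A` induced by a permutation `e`
of the letters; both subgroups are free, so `e` need not preserve the relators. -/
noncomputable def magnusEquiv : magnusSubgroup rels A ≃* magnusSubgroup rels (e '' A) :=
  (H.lettersEquiv hA).symm.trans <|
    (((FreeGroup.freeGroupCongr e).subgroupMap (lettersSubgroup A)).trans
      (MulEquiv.subgroupCongr (map_lettersSubgroup e A))).trans (H.lettersEquiv hB)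

lemma magnusEquiv_mk {w : FreeGroup X} (hw : w ∈ lettersSubgroup A) :
    (H.magnusEquiv e hA hB ⟨PresentedGroup.mk rels w, mk_mem_magnusSubgroup hw⟩ :
      PresentedGroup rels) = PresentedGroup.mk rels (FreeGroup.map e w) := by
  have hsymm : (H.lettersEquiv hA).symm ⟨PresentedGroup.mk rels w, mk_mem_magnusSubgroup hw⟩ =
      ⟨w, hw⟩ :=
    (MulEquiv.symm_apply_eq _).2 rfl
  rw [magnusEquiv, MulEquiv.trans_apply, hsymm]
  rfl

lemma isCompatible_magnusEquiv {D : Set X} (hD : ¬V ⊆ D) (heD : e '' D = D) :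
    IsCompatible (H.magnusEquiv e hA hB) (magnusSubgroup rels D) := by
  rintro ⟨_, w, hw, rfl⟩
  have hew := (map_mem_lettersSubgroup_image_iff e).2 hw
  have hinter {B : Set X} {v : FreeGroup X} (hB : ¬V ⊆ B) (hv : v ∈ lettersSubgroup B) :
      PresentedGroup.mk rels v ∈ magnusSubgroup rels D ↔ v ∈ lettersSubgroup D := by
    refine ⟨fun hvD => ?_, mk_mem_magnusSubgroup⟩
    have := H.inf_le hB hD ⟨mk_mem_magnusSubgroup hv, hvD⟩
    rw [mk_mem_magnusSubgroup_iff (H.injOn hB) Set.inter_subset_left hv] at this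
    exact lettersSubgroup_mono Set.inter_subset_right this
  rw [H.magnusEquiv_mk e hA hB hw, hinter hA hw, hinter hB hew,
    ← map_mem_lettersSubgroup_image_iff e, heD]

lemma isStable_magnusEquiv {C : Set X} (hC : C ⊆ A) (heC : e '' C = C) :
    IsStable (H.magnusEquiv e hA hB) (magnusSubgroup rels C) where
  le_source := magnusSubgroup_mono hC
  le_target := magnusSubgroup_mono (heC.superset.trans (Set.image_mono hC))
  isCompatible := H.isCompatible_magnusEquiv e hA hB (fun h => hA (h.trans hC)) heC

lemma subset_magnusSubgroup_inter_preimage {D : Set X} (hD : D ⊆ A) {K : Set (PresentedGroup rels)}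
    (hK : ∀ h ∈ K, ∃ ha : h ∈ magnusSubgroup rels A,
      (H.magnusEquiv e hA hB ⟨h, ha⟩ : PresentedGroup rels) ∈ K)
    (hKD : K ⊆ magnusSubgroup rels D) : K ⊆ magnusSubgroup rels (D ∩ e ⁻¹' D) := by
  intro h hh
  obtain ⟨w, hw, rfl⟩ := hKD hh
  obtain ⟨_, hk⟩ := hK _ hh
  rw [H.magnusEquiv_mk e hA hB (lettersSubgroup_mono hD hw)] at hk
  have hew := (map_mem_lettersSubgroup_image_iff e).2 hw
  have heD : ¬V ⊆ e '' D := fun h => hB (h.trans (Set.image_mono hD))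
  have hmem := H.inf_le heD (fun h => hA (h.trans hD)) ⟨mk_mem_magnusSubgroup hew, hKD hk⟩
  rw [mk_mem_magnusSubgroup_iff (H.injOn heD) Set.inter_subset_left hew,
    ← Set.image_inter_preimage, map_mem_lettersSubgroup_image_iff] at hmem
  exact mk_mem_magnusSubgroup hmem

lemma t_mul_of_mk {w : FreeGroup X} (hw : w ∈ lettersSubgroup A) :
    (HNNExtension.t : HNNExtension _ _ _ (H.magnusEquiv e hA hB)) *
        HNNExtension.of (PresentedGroup.mk rels w) =
      HNNExtension.of (PresentedGroup.mk rels (FreeGroup.map e w)) * HNNExtension.t := by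
  rw [← H.magnusEquiv_mk e hA hB hw]
  exact HNNExtension.t_mul_of
    (⟨PresentedGroup.mk rels w, mk_mem_magnusSubgroup hw⟩ : magnusSubgroup rels A)

end IsMagnus

end Magnus

/-! ### Lifting words to levels -/

section Levels

open Multiplicative

variable {X : Type*}

/-- Raising the level (the second coordinate) of every letter by one. -/
def levelShift (X : Type*) : X × ℤ ≃ X × ℤ :=
  (Equiv.refl X).prodCongr (Equiv.addRight 1)

@[simp] lemma levelShift_apply (p : X × ℤ) : levelShift X p = (p.1, p.2 + 1) := rfl

/-- The action of `ℤ` on the free group on `X × ℤ` by shifts of the level. -/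
def levelShiftAut (X : Type*) : Multiplicative ℤ →* MulAut (FreeGroup (X × ℤ)) :=
  zpowersHom _ (FreeGroup.freeGroupCongr (levelShift X))

@[simp] lemma levelShiftAut_of (k : Multiplicative ℤ) (x : X) (i : ℤ) :
    levelShiftAut X k (FreeGroup.of (x, i)) = FreeGroup.of (x, i + k.toAdd) := by
  have hone (i : ℤ) : levelShiftAut X (ofAdd 1) (FreeGroup.of (x, i)) =
      FreeGroup.of (x, i + 1) := by
    simp [levelShiftAut]
  obtain ⟨k, rfl⟩ := ofAdd.surjective k
  rw [toAdd_ofAdd]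
  induction k generalizing i with
  | zero => simp
  | succ k ih => rw [ofAdd_add, map_mul, MulAut.mul_apply, hone, ih, add_assoc, add_comm 1]
  | pred k ih =>
    rw [sub_eq_add_neg, ofAdd_add, map_mul, MulAut.mul_apply, ofAdd_neg 1, map_inv,
      ← sub_add_cancel i 1, ← hone, MulAut.inv_apply_self, ih]
    congr 2
    ring

/-- The homomorphism that records, for a word read from level `0`, the word in the letters `(y, i)`,
where `i` is the level at which `y` is met, together with the final level; the letter `x` raises the
level by `φ x`. -/
def levelLift (φ : X → ℤ) : FreeGroup X →* FreeGroup (X × ℤ) ⋊[levelShiftAut X] Multiplicative ℤ :=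
  FreeGroup.lift fun x => ⟨FreeGroup.of (x, 0), ofAdd (φ x)⟩

variable {φ : X → ℤ}

@[simp] lemma levelLift_of (x : X) :
    levelLift φ (FreeGroup.of x) = ⟨FreeGroup.of (x, 0), ofAdd (φ x)⟩ :=
  FreeGroup.lift_apply_of

lemma map_fst_left_levelLift (w : FreeGroup X) :
    FreeGroup.map Prod.fst (levelLift φ w).left = w := by
  let π := SemidirectProduct.lift (φ := levelShiftAut X) (FreeGroup.map Prod.fst)
    (1 : Multiplicative ℤ →* FreeGroup X) fun k => by ext ⟨x, i⟩; simp
  have hπ : π.comp (levelLift φ) = MonoidHom.id _ := by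
    ext x
    simp [π, SemidirectProduct.lift]
  simpa [π, SemidirectProduct.lift] using DFunLike.congr_fun hπ w

lemma left_levelLift_mem {Y : Set X} {w : FreeGroup X} (hw : w ∈ lettersSubgroup Y) :
    (levelLift φ w).left ∈ lettersSubgroup (Prod.fst ⁻¹' Y) := by
  have hshift (k : Multiplicative ℤ) : lettersSubgroup (Prod.fst ⁻¹' Y) ≤
      (lettersSubgroup (Prod.fst ⁻¹' Y)).comap (levelShiftAut X k).toMonoidHom :=
    lettersSubgroup_le_iff.2 fun ⟨x, i⟩ hx => by
      simpa using of_mem_lettersSubgroup (Y := Prod.fst ⁻¹' Y) (x := (x, i + k.toAdd)) hx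
  induction hw using Subgroup.closure_induction with
  | mem _ h =>
    obtain ⟨y, hy, rfl⟩ := h
    simpa using of_mem_lettersSubgroup (Y := Prod.fst ⁻¹' Y) hy
  | one => simp
  | mul u v _ _ hu hv =>
    rw [map_mul, SemidirectProduct.mul_left]
    exact mul_mem hu (hshift _ hv)
  | inv u _ hu =>
    rw [map_inv, SemidirectProduct.inv_left]
    exact hshift _ (inv_mem hu)

/-- The letters of `X × ℤ`, the level of the letter `x` being confined to `[a, b]`. -/
def levelWindow (x : X) (a b : ℤ) : Set (X × ℤ) :=
  {p | p.1 = x → p.2 ∈ Set.Icc a b}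

lemma preimage_fst_subset_levelWindow (x : X) (a b : ℤ) :
    Prod.fst ⁻¹' {x}ᶜ ⊆ levelWindow x a b :=
  fun _ hp hpx => (hp hpx).elim

lemma levelWindow_subset_preimage_fst {x : X} {a b : ℤ} (h : b < a) :
    levelWindow x a b ⊆ Prod.fst ⁻¹' {x}ᶜ :=
  fun _ hp hpx => h.not_ge ((hp hpx).1.trans (hp hpx).2)

lemma levelWindow_inter_preimage_levelShift_subset (x : X) (a b : ℤ) :
    levelWindow x a b ∩ levelShift X ⁻¹' levelWindow x a b ⊆ levelWindow x a (b - 1) :=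
  fun _ ⟨hp, hp'⟩ hpx => ⟨(hp hpx).1, le_sub_iff_add_le.2 (hp' hpx).2⟩

lemma image_levelShift_preimage_fst (Y : Set X) :
    levelShift X '' (Prod.fst ⁻¹' Y) = Prod.fst ⁻¹' Y := by
  rw [Equiv.image_eq_preimage_symm]
  rfl

section Evaluation

variable {E : Type*} [Group E] (o : FreeGroup (X × ℤ) →* E) (t : E) (m : ℤ)

/-- The extension of `o` from the letters of level `m` to all letters for which conjugation by `t`
raises the level. -/
def levelEval : FreeGroup (X × ℤ) →* E :=
  FreeGroup.lift fun p => MulAut.conj (t ^ (p.2 - m)) (o (FreeGroup.of (p.1, m)))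

variable {o t m} in
lemma levelEval_of_add (x : X) (i k : ℤ) :
    levelEval o t m (FreeGroup.of (x, i + k)) =
      MulAut.conj (t ^ k) (levelEval o t m (FreeGroup.of (x, i))) := by
  simp only [levelEval, FreeGroup.lift_apply_of]
  rw [← MulAut.mul_apply, ← map_mul, ← zpow_add, add_sub_right_comm, add_comm (i - m)]

/-- The homomorphism from the free group on `X` that reads words from level `0`. -/
def levelHom (φ : X → ℤ) : FreeGroup X →* E :=
  (SemidirectProduct.lift (levelEval o t m) (zpowersHom E t) fun k => by
    ext ⟨x, i⟩
    simp [levelEval_of_add]).comp (levelLift φ)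

variable {o t m}

lemma levelHom_apply (w : FreeGroup X) :
    levelHom o t m φ w =
      levelEval o t m (levelLift φ w).left * t ^ (levelLift φ w).right.toAdd := by
  simp [levelHom, SemidirectProduct.lift]

variable {x : X} {M : ℤ}

lemma levelEval_of
    (hrel : ∀ p ∈ levelWindow x m (M - 1),
      t * o (FreeGroup.of p) = o (FreeGroup.of (levelShift X p)) * t)
    {y : X} {i : ℤ} (hy : (y, i) ∈ levelWindow x m M) :
    levelEval o t m (FreeGroup.of (y, i)) = o (FreeGroup.of (y, i)) := by
  have hsucc (j : ℤ) (hj : (y, j) ∈ levelWindow x m (M - 1)) :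
      levelEval o t m (FreeGroup.of (y, j)) = o (FreeGroup.of (y, j)) ↔
        levelEval o t m (FreeGroup.of (y, j + 1)) = o (FreeGroup.of (y, j + 1)) := by
    have hconj : MulAut.conj t (o (FreeGroup.of (y, j))) = o (FreeGroup.of (y, j + 1)) :=
      mul_inv_eq_of_eq_mul (hrel _ hj)
    rw [levelEval_of_add, zpow_one, ← hconj, EmbeddingLike.apply_eq_iff_eq]
  induction i using Int.inductionOn' (b := m) with
  | zero => simp [levelEval]
  | succ j hj ih =>
    have hj' : (y, j) ∈ levelWindow x m (M - 1) := fun h => ⟨hj, le_sub_iff_add_le.2 (hy h).2⟩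
    exact (hsucc j hj').1 (ih fun h => ⟨hj, by have := (hy h).2; simp only at this ⊢; omega⟩)
  | pred j hj ih =>
    have hne : y ≠ x := fun h => by have := (hy h).1; simp only at this; omega
    refine (hsucc (j - 1) fun h => (hne h).elim).2 ?_
    rw [sub_add_cancel]
    exact ih fun h => (hne h).elim

lemma levelEval_eq
    (hrel : ∀ p ∈ levelWindow x m (M - 1),
      t * o (FreeGroup.of p) = o (FreeGroup.of (levelShift X p)) * t)
    {w : FreeGroup (X × ℤ)} (hw : w ∈ lettersSubgroup (levelWindow x m M)) :
    levelEval o t m w = o w :=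
  hom_eq_of_mem_lettersSubgroup (fun _ hp => levelEval_of hrel hp) hw

end Evaluation

end Levels

/-! ### The inductive step -/

section Step

open HNNExtension Multiplicative

variable {X : Type*} {rels : Set (FreeGroup X)} {φ : X → ℤ} {V' : Set (X × ℤ)} {x : X} {m M : ℤ}

/-- The relators lifted to the letters `X × ℤ`. -/
def levelRels (φ : X → ℤ) (rels : Set (FreeGroup X)) : Set (FreeGroup (X × ℤ)) :=
  (fun r => (levelLift φ r).left) '' rels

/-- The homomorphism of the lifted group to the one-relator group that forgets levels. -/
def forgetLevels (φ : X → ℤ) (rels : Set (FreeGroup X)) :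
    PresentedGroup (levelRels φ rels) →* PresentedGroup rels :=
  PresentedGroup.map (FreeGroup.map Prod.fst) <| by
    rintro _ ⟨r, hr, rfl⟩
    rwa [map_fst_left_levelLift]

@[simp] lemma forgetLevels_mk (w : FreeGroup (X × ℤ)) :
    forgetLevels φ rels (PresentedGroup.mk _ w) =
      PresentedGroup.mk rels (FreeGroup.map Prod.fst w) := rfl

lemma forgetLevels_mem {Y : Set X} {g : PresentedGroup (levelRels φ rels)}
    (hg : g ∈ magnusSubgroup (levelRels φ rels) (Prod.fst ⁻¹' Y)) :
    forgetLevels φ rels g ∈ magnusSubgroup rels Y := by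
  obtain ⟨w, hw, rfl⟩ := hg
  refine mk_mem_magnusSubgroup
    (lettersSubgroup_mono (Set.image_preimage_subset (Prod.fst : X × ℤ → X) Y) ?_)
  rw [← map_lettersSubgroup]
  exact ⟨w, hw, rfl⟩

/-- The levels of the letter `x` in the lifted relators span exactly the interval `[m, M]`; the
extreme letters are required to lie in `V'`. -/
structure IsLevelSpan (φ : X → ℤ) (rels : Set (FreeGroup X)) (V' : Set (X × ℤ)) (x : X)
    (m M : ℤ) : Prop where
  right_eq_one : ∀ r ∈ rels, (levelLift φ r).right = 1
  left_mem : ∀ r ∈ rels, (levelLift φ r).left ∈ lettersSubgroup (levelWindow x m M)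
  lower_mem : (x, m) ∈ V'
  upper_mem : (x, M) ∈ V'

namespace IsLevelSpan

lemma not_subset_window (h : IsLevelSpan φ rels V' x m M) : ¬V' ⊆ levelWindow x m (M - 1) :=
  fun hV => (sub_one_lt M).not_ge (hV h.upper_mem rfl).2

lemma not_subset_image_window (h : IsLevelSpan φ rels V' x m M) :
    ¬V' ⊆ levelShift X '' levelWindow x m (M - 1) := by
  rw [Equiv.image_eq_preimage_symm]
  exact fun hV => (sub_one_lt m).not_ge (hV h.lower_mem rfl).1

variable (h : IsLevelSpan φ rels V' x m M) (H : IsMagnus (levelRels φ rels) V')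

/-- The isomorphism, induced by raising levels, between the subgroups of the lifted group generated
by the letters in which the top level, respectively the bottom level, of `x` is left out. -/
noncomputable def shiftEquiv :
    magnusSubgroup (levelRels φ rels) (levelWindow x m (M - 1)) ≃*
      magnusSubgroup (levelRels φ rels) (levelShift X '' levelWindow x m (M - 1)) :=
  H.magnusEquiv (levelShift X) h.not_subset_window h.not_subset_image_window

/-- The HNN extension of the lifted group in which the stable letter raises levels. -/
abbrev LevelExtension : Type _ :=
  HNNExtension (PresentedGroup (levelRels φ rels)) _ _ (h.shiftEquiv H)

/-- The map of the free group on `X` to the HNN extension that reads words from level `0`. -/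
noncomputable def freeHom : FreeGroup X →* h.LevelExtension H :=
  levelHom ((of : _ →* h.LevelExtension H).comp (PresentedGroup.mk _)) t m φ

lemma freeHom_eq {w : FreeGroup X}
    (hw : (levelLift φ w).left ∈ lettersSubgroup (levelWindow x m M)) :
    h.freeHom H w = of (PresentedGroup.mk _ (levelLift φ w).left) *
      t ^ (levelLift φ w).right.toAdd := by
  rw [freeHom, levelHom_apply, levelEval_eq (fun p hp => ?_) hw]
  · rfl
  · exact H.t_mul_of_mk (levelShift X) h.not_subset_window h.not_subset_image_window
      (of_mem_lettersSubgroup hp)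

lemma freeHom_of (y : X) :
    h.freeHom H (FreeGroup.of y) =
      t ^ (-m) * of (PresentedGroup.mk _ (FreeGroup.of (y, m))) * (t ^ (-m))⁻¹ * t ^ φ y := by
  simp only [freeHom, levelHom_apply, levelLift_of, levelEval, FreeGroup.lift_apply_of, zero_sub,
    MulAut.conj_apply, MonoidHom.comp_apply, toAdd_ofAdd]

/-- The homomorphism of the one-relator group to the HNN extension that reads words from
level `0`. -/
noncomputable def embedding : PresentedGroup rels →* h.LevelExtension H :=
  QuotientGroup.lift _ (h.freeHom H) <| Subgroup.normalClosure_le_normal fun r hr => by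
    have hr' : PresentedGroup.mk (levelRels φ rels) (levelLift φ r).left = 1 :=
      PresentedGroup.one_of_mem ⟨r, hr, rfl⟩
    simp [h.freeHom_eq H (h.left_mem r hr), h.right_eq_one r hr, hr']

@[simp] lemma embedding_mk (w : FreeGroup X) :
    h.embedding H (PresentedGroup.mk rels w) = h.freeHom H w := rfl

/-- The homomorphism of the HNN extension to the one-relator group that forgets levels. -/
noncomputable def retraction : h.LevelExtension H →* PresentedGroup rels :=
  HNNExtension.lift (forgetLevels φ rels) 1 <| by
    rintro ⟨_, w, hw, rfl⟩
    rw [one_mul, mul_one, shiftEquiv, H.magnusEquiv_mk _ _ _ hw, forgetLevels_mk, forgetLevels_mk,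
      FreeGroup.map.comp]
    rfl

lemma retraction_embedding (g : PresentedGroup rels) :
    h.retraction H (h.embedding H g) = g := by
  have hcomp : (h.retraction H).comp (h.embedding H) = MonoidHom.id _ := by
    ext y
    simp [PresentedGroup.of, retraction, h.freeHom_of H]
  exact DFunLike.congr_fun hcomp g

lemma embedding_injective : Function.Injective (h.embedding H) :=
  Function.LeftInverse.injective (h.retraction_embedding H)

lemma magnusSubgroup_eq_comap_stableExtension (Y : Set X) :
    magnusSubgroup rels Y = (stableExtension (h.shiftEquiv H)
      (magnusSubgroup (levelRels φ rels) (Prod.fst ⁻¹' Y))).comap (h.embedding H) := by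
  apply le_antisymm
  · rw [magnusSubgroup, Subgroup.map_le_iff_le_comap, lettersSubgroup_le_iff]
    intro y hy
    have ht := t_mem_stableExtension (φ := h.shiftEquiv H)
      (magnusSubgroup (levelRels φ rels) (Prod.fst ⁻¹' Y))
    rw [Subgroup.mem_comap, Subgroup.mem_comap, embedding_mk, freeHom_of]
    refine mul_mem (mul_mem (mul_mem (zpow_mem ht _) ?_) (inv_mem (zpow_mem ht _))) (zpow_mem ht _)
    exact of_mem_stableExtension (mk_mem_magnusSubgroup (of_mem_lettersSubgroup hy))
  · have hle : stableExtension (h.shiftEquiv H)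
        (magnusSubgroup (levelRels φ rels) (Prod.fst ⁻¹' Y)) ≤
        (magnusSubgroup rels Y).comap (h.retraction H) := by
      rw [stableExtension, Subgroup.closure_le]
      rintro _ (⟨g, hg, rfl⟩ | rfl)
      · simpa [retraction] using forgetLevels_mem hg
      · simp [retraction]
    intro g hg
    simpa [h.retraction_embedding H] using hle hg

lemma isStable_magnusSubgroup :
    IsStable (h.shiftEquiv H) (magnusSubgroup (levelRels φ rels) (Prod.fst ⁻¹' {x}ᶜ)) :=
  H.isStable_magnusEquiv _ _ _ (preimage_fst_subset_levelWindow x m (M - 1))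
    (image_levelShift_preimage_fst _)

include h

lemma not_subset_preimage_fst : ¬V' ⊆ Prod.fst ⁻¹' {x}ᶜ :=
  fun hV => hV h.lower_mem rfl

include H

lemma injOn_mk : Set.InjOn (PresentedGroup.mk rels) (lettersSubgroup {x}ᶜ) := by
  intro w hw v hv hwv
  have hw' := left_levelLift_mem (φ := φ) hw
  have hv' := left_levelLift_mem (φ := φ) hv
  have hle := lettersSubgroup_mono (preimage_fst_subset_levelWindow x m M)
  have heq := congrArg (h.embedding H) hwv
  rw [embedding_mk, embedding_mk, h.freeHom_eq H (hle hw'), h.freeHom_eq H (hle hv')] at heq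
  have hdeg := congrArg (stableDegree (h.shiftEquiv H)) heq
  rw [stableDegree_of_mul_zpow, stableDegree_of_mul_zpow] at hdeg
  rw [ofAdd.injective hdeg, mul_left_inj] at heq
  rw [← map_fst_left_levelLift (φ := φ) w, ← map_fst_left_levelLift (φ := φ) v,
    H.injOn h.not_subset_preimage_fst hw' hv' (HNNExtension.of_injective _ heq)]

lemma subset_magnusSubgroup_of_shiftEquiv {K : Set (PresentedGroup (levelRels φ rels))}
    (hK : ∀ g ∈ K, ∃ hg : g ∈ magnusSubgroup _ (levelWindow x m (M - 1)),
      (h.shiftEquiv H ⟨g, hg⟩ : PresentedGroup (levelRels φ rels)) ∈ K) :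
    K ⊆ magnusSubgroup (levelRels φ rels) (Prod.fst ⁻¹' {x}ᶜ) := by
  have hshrink (s : ℕ) : K ⊆ magnusSubgroup (levelRels φ rels) (levelWindow x m (M - 1 - s)) := by
    induction s with
    | zero => exact fun g hg => by simpa using (hK g hg).1
    | succ s ih =>
      have hsub : levelWindow x m (M - 1 - s) ⊆ levelWindow x m (M - 1) :=
        fun p hp hpx => ⟨(hp hpx).1, by have := (hp hpx).2; omega⟩
      refine (H.subset_magnusSubgroup_inter_preimage _ _ _ hsub hK ih).trans
        (magnusSubgroup_mono ?_)
      rw [Nat.cast_succ, ← sub_sub]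
      exact levelWindow_inter_preimage_levelShift_subset x m (M - 1 - s)
  exact (hshrink (M - m).toNat).trans
    (magnusSubgroup_mono (levelWindow_subset_preimage_fst (by omega)))

lemma isMalnormal_magnusSubgroup : (magnusSubgroup rels {x}ᶜ).IsMalnormal := by
  rw [h.magnusSubgroup_eq_comap_stableExtension H]
  exact isMalnormal_comap (h.embedding_injective H) <|
    (h.isStable_magnusSubgroup H).isMalnormal_stableExtension
      (H.isMalnormal h.not_subset_window) (H.isMalnormal h.not_subset_image_window)
      (H.isMalnormal h.not_subset_preimage_fst) fun _ => h.subset_magnusSubgroup_of_shiftEquiv H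

lemma magnusSubgroup_inf_le {z : X} (hz : z ∈ Prod.fst '' V') :
    magnusSubgroup rels {x}ᶜ ⊓ magnusSubgroup rels {z}ᶜ ≤ magnusSubgroup rels ({x}ᶜ ∩ {z}ᶜ) := by
  have hz' : ¬V' ⊆ Prod.fst ⁻¹' {z}ᶜ := by
    obtain ⟨p, hp, rfl⟩ := hz
    exact fun hV => hV hp rfl
  simp only [h.magnusSubgroup_eq_comap_stableExtension H]
  intro g hg
  obtain ⟨hgx, hgz⟩ := Subgroup.mem_inf.1 hg
  obtain ⟨c, hc, k, hgk⟩ := (h.isStable_magnusSubgroup H).mem_stableExtension_iff.1 hgx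
  rw [Subgroup.mem_comap, hgk] at hgz
  have htz := zpow_mem (t_mem_stableExtension (φ := h.shiftEquiv H)
    (magnusSubgroup (levelRels φ rels) (Prod.fst ⁻¹' {z}ᶜ))) k
  have hcz := (Subgroup.mul_mem_cancel_right _ htz).1 hgz
  have hcompat : IsCompatible (h.shiftEquiv H) (magnusSubgroup _ (Prod.fst ⁻¹' {z}ᶜ)) :=
    H.isCompatible_magnusEquiv _ _ _ hz' (image_levelShift_preimage_fst _)
  rw [hcompat.of_mem_stableExtension_iff] at hcz
  rw [Subgroup.mem_comap, hgk]
  exact mul_mem (of_mem_stableExtension (H.inf_le h.not_subset_preimage_fst hz' ⟨hc, hcz⟩))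
    (zpow_mem (t_mem_stableExtension _) k)

end IsLevelSpan

lemma exists_isLevelSpan (hweight : ∀ r ∈ rels, (levelLift φ r).right = 1)
    (hfin : V'.Finite) (hlift : levelRels φ rels ⊆ lettersSubgroup V') (hx : x ∈ Prod.fst '' V') :
    ∃ m M, IsLevelSpan φ rels V' x m M := by
  have hlevels : {i | (x, i) ∈ V'}.Finite := hfin.preimage (Prod.mk_right_injective x).injOn
  have hne : {i | (x, i) ∈ V'}.Nonempty := by
    obtain ⟨⟨_, i⟩, hi, rfl⟩ := hx
    exact ⟨i, hi⟩
  obtain ⟨m, hm, hmin⟩ := hlevels.exists_minimal hne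
  obtain ⟨M, hM, hmax⟩ := hlevels.exists_maximal hne
  have hsub : V' ⊆ levelWindow x m M := by
    rintro ⟨_, i⟩ hi rfl
    exact ⟨(le_total m i).elim id (hmin hi), (le_total i M).elim id (hmax hi)⟩
  exact ⟨m, M, hweight, fun r hr => lettersSubgroup_mono hsub (hlift ⟨r, hr, rfl⟩), hm, hM⟩

theorem IsMagnus.of_levelRels (H : IsMagnus (levelRels φ rels) V')
    (hweight : ∀ r ∈ rels, (levelLift φ r).right = 1) (hfin : V'.Finite)
    (hlift : levelRels φ rels ⊆ lettersSubgroup V') : IsMagnus rels (Prod.fst '' V') := by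
  choose! m M hspan using fun x => exists_isLevelSpan (x := x) hweight hfin hlift
  exact .of_compl_singleton (fun x hx => (hspan x hx).injOn_mk H)
    (fun x hx => (hspan x hx).isMalnormal_magnusSubgroup H)
    fun x hx z hz _ => (hspan x hx).magnusSubgroup_inf_le H hz

end Step

/-! ### Cyclic words -/

section CyclicWord

open Multiplicative

variable {X : Type*} {W : ℕ → X × Bool} {l : ℕ}

/-- The exponent sum, weighted by `φ`, of a single signed letter. -/
def signedWeight (φ : X → ℤ) (p : X × Bool) : ℤ := if p.2 then φ p.1 else -φ p.1

/-- The weight of the first `i` letters of an infinite word. -/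
def height (W : ℕ → X × Bool) (φ : X → ℤ) (i : ℕ) : ℤ :=
  ∑ j ∈ Finset.range i, signedWeight φ (W j)

/-- The level of the `i`-th letter of an infinite word: an inverse letter carries the height that
follows it, in accordance with `x⁻¹ = t⁻¹ (x t⁻¹)⁻¹`. -/
def letterLevel (W : ℕ → X × Bool) (φ : X → ℤ) (i : ℕ) : ℤ :=
  if (W i).2 then height W φ i else height W φ (i + 1)

/-- The lift of an infinite word to the letters `X × ℤ`. -/
def levelWord (W : ℕ → X × Bool) (φ : X → ℤ) (i : ℕ) : (X × ℤ) × Bool :=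
  (((W i).1, letterLevel W φ i), (W i).2)

/-- The element of the free group spelled by the first `l` letters of an infinite word. -/
def initialWord (W : ℕ → X × Bool) (l : ℕ) : FreeGroup X := FreeGroup.mk ((List.range l).map W)

/-- An infinite word obtained by repeating a cyclically reduced word of length `l > 0`. -/
structure IsCyclicWord (W : ℕ → X × Bool) (l : ℕ) : Prop where
  pos : 0 < l
  periodic : Function.Periodic W l
  sign_eq : ∀ i, (W i).1 = (W (i + 1)).1 → (W i).2 = (W (i + 1)).2

/-- The set of letters of an infinite word. -/
def wordLetters (W : ℕ → X × Bool) : Set X := Set.range fun i => (W i).1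

lemma height_zero (φ : X → ℤ) : height W φ 0 = 0 := rfl

lemma height_succ (φ : X → ℤ) (i : ℕ) :
    height W φ (i + 1) = height W φ i + signedWeight φ (W i) :=
  Finset.sum_range_succ ..

lemma height_smul_sub_smul (a b : ℤ) (φ ψ : X → ℤ) (i : ℕ) :
    height W (a • φ - b • ψ) i = a * height W φ i - b * height W ψ i := by
  simp only [height, Finset.mul_sum, ← Finset.sum_sub_distrib]
  refine Finset.sum_congr rfl fun j _ => ?_
  simp only [signedWeight, Pi.sub_apply, Pi.smul_apply, smul_eq_mul]
  split_ifs <;> ring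

lemma initialWord_add (W : ℕ → X × Bool) (i j : ℕ) :
    initialWord W (i + j) = initialWord W i * initialWord (fun s => W (i + s)) j := by
  rw [initialWord, List.range_add, List.map_append, List.map_map, ← FreeGroup.mul_mk]
  rfl

lemma initialWord_succ (W : ℕ → X × Bool) (i : ℕ) :
    initialWord W (i + 1) = initialWord W i * FreeGroup.mk [W i] :=
  initialWord_add W i 1

lemma mk_mem_lettersSubgroup {Y : Set X} {p : X × Bool} (hp : p.1 ∈ Y) :
    FreeGroup.mk [p] ∈ lettersSubgroup Y := by
  obtain ⟨y, _ | _⟩ := p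
  · exact inv_mem (of_mem_lettersSubgroup hp)
  · exact of_mem_lettersSubgroup hp

lemma initialWord_mem_lettersSubgroup {Y : Set X} (h : ∀ i < l, (W i).1 ∈ Y) :
    initialWord W l ∈ lettersSubgroup Y := by
  induction l with
  | zero => exact one_mem _
  | succ l ih =>
    rw [initialWord_succ]
    exact mul_mem (ih fun i hi => h i (hi.trans l.lt_succ_self))
      (mk_mem_lettersSubgroup (h l l.lt_succ_self))

lemma initialWord_mul_of_periodic (hW : Function.Periodic W l) (k : ℕ) :
    initialWord W (l * k) = initialWord W l ^ k := by
  induction k with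
  | zero => rfl
  | succ k ih =>
    have hshift : (fun s => W (l + s)) = W := funext fun s => by rw [add_comm, hW]
    rw [Nat.mul_succ, add_comm, initialWord_add, hshift, ih, pow_succ']

lemma letterLevel_eq (φ : X → ℤ) (i : ℕ) :
    letterLevel W φ i = (if (W i).2 then 0 else -φ (W i).1) + height W φ i := by
  rw [letterLevel, height_succ, signedWeight]
  split_ifs <;> ring

lemma levelShiftAut_mk (k : Multiplicative ℤ) (x : X) (i : ℤ) (b : Bool) :
    levelShiftAut X k (FreeGroup.mk [((x, i), b)]) = FreeGroup.mk [((x, i + k.toAdd), b)] := by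
  cases b
  · exact (map_inv (levelShiftAut X k) _).trans (congrArg _ (levelShiftAut_of k x i))
  · exact levelShiftAut_of k x i

lemma levelLift_mk (φ : X → ℤ) (p : X × Bool) :
    levelLift φ (FreeGroup.mk [p]) =
      ⟨FreeGroup.mk [((p.1, if p.2 then 0 else -φ p.1), p.2)],
        ofAdd (signedWeight φ p)⟩ := by
  obtain ⟨x, _ | _⟩ := p
  · have hinv : levelLift φ (FreeGroup.mk [(x, false)]) = (levelLift φ (FreeGroup.of x))⁻¹ :=
      map_inv (levelLift φ) (FreeGroup.of x)
    rw [hinv, levelLift_of]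
    ext
    · exact (levelShiftAut_mk (ofAdd (-φ x)) x 0 false).trans (by simp)
    · rfl
  · exact levelLift_of x

lemma levelLift_initialWord (W : ℕ → X × Bool) (φ : X → ℤ) (l : ℕ) :
    levelLift φ (initialWord W l) =
      ⟨initialWord (levelWord W φ) l, ofAdd (height W φ l)⟩ := by
  induction l with
  | zero => rfl
  | succ l ih =>
    rw [initialWord_succ, initialWord_succ, map_mul, ih, levelLift_mk, height_succ, levelWord,
      letterLevel_eq, SemidirectProduct.mul_def, levelShiftAut_mk, toAdd_ofAdd, ofAdd_add]

lemma height_add (hW : Function.Periodic W l) (φ : X → ℤ) (i : ℕ) :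
    height W φ (i + l) = height W φ i + height W φ l := by
  induction i with
  | zero => simp [height_zero]
  | succ i ih => rw [add_right_comm, height_succ, height_succ, ih, hW, add_right_comm]

lemma letterLevel_periodic {φ : X → ℤ} (hW : Function.Periodic W l) (hφ : height W φ l = 0) :
    Function.Periodic (letterLevel W φ) l := by
  intro i
  rw [letterLevel, letterLevel, hW, add_right_comm, height_add hW, height_add hW, hφ, add_zero,
    add_zero]

lemma isCyclicWord_levelWord {φ : X → ℤ} (hW : IsCyclicWord W l) (hφ : height W φ l = 0) :
    IsCyclicWord (levelWord W φ) l where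
  pos := hW.pos
  periodic i := by
    simp only [levelWord, hW.periodic i, letterLevel_periodic hW.periodic hφ i]
  sign_eq i h := hW.sign_eq i (congrArg (fun p : X × ℤ => p.1) h)

lemma image_fst_wordLetters_levelWord (W : ℕ → X × Bool) (φ : X → ℤ) :
    Prod.fst '' wordLetters (levelWord W φ) = wordLetters W :=
  (Set.range_comp _ _).symm

lemma wordLetters_eq_image (hl : 0 < l) (hW : Function.Periodic W l) :
    wordLetters W = (fun i => (W i).1) '' Set.Iio l := by
  refine Set.Subset.antisymm ?_ (Set.image_subset_range _ _)
  rintro _ ⟨i, rfl⟩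
  exact ⟨i % l, Nat.mod_lt i hl, congrArg Prod.fst (hW.map_mod_nat i)⟩

lemma finite_wordLetters (hW : IsCyclicWord W l) : (wordLetters W).Finite := by
  rw [wordLetters_eq_image hW.pos hW.periodic]
  exact (Set.finite_Iio l).image _

lemma ncard_wordLetters_le (hW : IsCyclicWord W l) : (wordLetters W).ncard ≤ l := by
  rw [wordLetters_eq_image hW.pos hW.periodic]
  exact (Set.ncard_image_le (Set.finite_Iio l)).trans_eq (by simp)

lemma ncard_wordLetters_lt_levelWord {φ : X → ℤ} (hW : IsCyclicWord W l) (hφ : height W φ l = 0)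
    {i j : ℕ} (hij : (W i).1 = (W j).1) (hlevel : letterLevel W φ i ≠ letterLevel W φ j) :
    (wordLetters W).ncard < (wordLetters (levelWord W φ)).ncard := by
  have hfin := finite_wordLetters (isCyclicWord_levelWord hW hφ)
  rw [← image_fst_wordLetters_levelWord W φ]
  refine (Set.ncard_image_le hfin).lt_of_ne fun heq => hlevel ?_
  exact congrArg Prod.snd (Set.injOn_of_ncard_image_eq heq hfin ⟨i, rfl⟩ ⟨j, rfl⟩ hij)

end CyclicWord

/-! ### Words whose letters cannot be separated by levels -/

section Unseparated

open Function

variable {X : Type*} {W : ℕ → X × Bool} {l : ℕ}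

/-- Every weight that vanishes on the cyclic word puts each of its letters at a single level. -/
def IsUnseparated (W : ℕ → X × Bool) (l : ℕ) : Prop :=
  ∀ φ : X → ℤ, height W φ l = 0 →
    ∀ ⦃i j⦄, (W i).1 = (W j).1 → letterLevel W φ i = letterLevel W φ j

/-- The segment of the letters with index in `[i, j)` is nonempty and has weight zero with respect
to every weight that vanishes on the cyclic word. Its exponent sum vector is then a rational
multiple of that of the cyclic word. -/
structure IsBalanced (W : ℕ → X × Bool) (l i j : ℕ) : Prop where
  lt : i < j
  height_eq : ∀ φ : X → ℤ, height W φ l = 0 → height W φ i = height W φ j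

lemma eq_and_isBalanced_or_isBalanced (hW : IsCyclicWord W l) (hlevel : IsUnseparated W l)
    {i j : ℕ} (hij : i < j) (h : (W i).1 = (W j).1) :
    W i = W j ∧ IsBalanced W l i j ∨ IsBalanced W l (i + 1) j := by
  by_cases hsign : (W i).2 = (W j).2
  · refine .inl ⟨Prod.ext h hsign, hij, fun φ hφ => ?_⟩
    have := hlevel φ hφ h
    simp only [letterLevel, height_succ, signedWeight, hsign, h] at this
    split_ifs at this
    · exact this
    · exact add_right_cancel this
  · have hne : i + 1 ≠ j := by
      rintro rfl
      exact hsign (hW.sign_eq i h)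
    refine .inr ⟨lt_of_le_of_ne hij hne, fun φ hφ => ?_⟩
    have := hlevel φ hφ h
    simp only [letterLevel, height_succ, signedWeight, h] at this ⊢
    cases hi : (W i).2 <;> cases hj : (W j).2 <;> simp_all

lemma height_single_ne_iff [DecidableEq X] {i j : ℕ} (hij : i ≤ j)
    (hinj : Set.InjOn (fun s => (W s).1) (Set.Ico i j)) (y : X) :
    height W (Pi.single y 1) i ≠ height W (Pi.single y 1) j ↔
      y ∈ (fun s => (W s).1) '' Set.Ico i j := by
  have hsum : height W (Pi.single y 1) j - height W (Pi.single y 1) i =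
      ∑ s ∈ Finset.Ico i j, signedWeight (Pi.single y 1) (W s) :=
    (Finset.sum_Ico_eq_sub _ hij).symm
  rw [ne_comm, ← sub_ne_zero, hsum]
  constructor
  · refine fun h => by_contra fun hy => h (Finset.sum_eq_zero fun s hs => ?_)
    have hsy : (W s).1 ≠ y := fun hsy => hy ⟨s, Finset.mem_Ico.1 hs, hsy⟩
    simp [signedWeight, hsy]
  · rintro ⟨s, hs, rfl⟩
    rw [Finset.sum_eq_single_of_mem s (Finset.mem_Ico.2 hs)]
    · unfold signedWeight
      split_ifs <;> simp
    · intro s' hs' hne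
      have : (W s').1 ≠ (W s).1 := fun h => hne (hinj (Finset.mem_Ico.1 hs') hs h)
      simp [signedWeight, this]

lemma IsBalanced.image_eq [DecidableEq X] {i j : ℕ} (h : IsBalanced W l i j)
    (hinj : Set.InjOn (fun s => (W s).1) (Set.Ico i j)) :
    (fun s => (W s).1) '' Set.Ico i j = {y | height W (Pi.single y 1) l ≠ 0} := by
  have hiff := height_single_ne_iff h.lt.le hinj
  have hprop (y z : X) : height W (Pi.single z 1) l *
      (height W (Pi.single y 1) i - height W (Pi.single y 1) j) =
      height W (Pi.single y 1) l * (height W (Pi.single z 1) i - height W (Pi.single z 1) j) := by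
    have := h.height_eq
      (height W (Pi.single z 1) l • Pi.single y 1 - height W (Pi.single y 1) l • Pi.single z 1)
      (by rw [height_smul_sub_smul]; ring)
    rw [height_smul_sub_smul, height_smul_sub_smul] at this
    linarith
  let z := (W i).1
  have hz : height W (Pi.single z 1) i - height W (Pi.single z 1) j ≠ 0 :=
    sub_ne_zero.2 ((hiff z).2 ⟨i, ⟨le_rfl, h.lt⟩, rfl⟩)
  have hz' : height W (Pi.single z 1) l ≠ 0 := fun h0 => sub_ne_zero.1 hz (h.height_eq _ h0)
  ext y
  rw [← hiff, ← sub_ne_zero, Set.mem_ofPred_eq, ← mul_ne_zero_iff_left hz', hprop,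
    mul_ne_zero_iff_right hz]

lemma exists_isBalanced_lt (hW : IsCyclicWord W l) (hlevel : IsUnseparated W l) {i j : ℕ}
    (hinj : ¬Set.InjOn (fun s => (W s).1) (Set.Ico i j)) :
    ∃ i' j', i ≤ i' ∧ j' < j ∧ IsBalanced W l i' j' := by
  obtain ⟨p, hp, q, hq, hpq, heq⟩ : ∃ p, i ≤ p ∧ ∃ q, q < j ∧ p < q ∧ (W p).1 = (W q).1 := by
    simp only [Set.InjOn, not_forall] at hinj
    obtain ⟨p, hp, q, hq, heq, hne⟩ := hinj
    obtain hlt | hlt := lt_or_gt_of_ne hne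
    · exact ⟨p, hp.1, q, hq.2, hlt, heq⟩
    · exact ⟨q, hq.1, p, hp.2, hlt, heq.symm⟩
  obtain ⟨-, h⟩ | h := eq_and_isBalanced_or_isBalanced hW hlevel hpq heq
  · exact ⟨p, q, hp, hq, h⟩
  · exact ⟨p + 1, q, hp.trans p.le_succ, hq, h⟩

lemma IsBalanced.support_subset [DecidableEq X] (hW : IsCyclicWord W l)
    (hlevel : IsUnseparated W l) {i j : ℕ} (h : IsBalanced W l i j) :
    {y | height W (Pi.single y 1) l ≠ 0} ⊆ (fun s => (W s).1) '' Set.Ico i j := by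
  induction hd : j - i using Nat.strong_induction_on generalizing i j with
  | _ d ih =>
    by_cases hinj : Set.InjOn (fun s => (W s).1) (Set.Ico i j)
    · exact (h.image_eq hinj).ge
    · obtain ⟨i', j', hi, hj, h'⟩ := exists_isBalanced_lt hW hlevel hinj
      exact (ih (j' - i') (by have := h'.lt; omega) h' rfl).trans
        (Set.image_mono (Set.Ico_subset_Ico hi hj.le))

variable {r : ℕ}

lemma IsBalanced.injOn_of_minimal (hW : IsCyclicWord W l) (hlevel : IsUnseparated W l)
    (hmin : ∀ i j, IsBalanced W l i j → i + r ≤ j) (i : ℕ) :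
    Set.InjOn (fun s => (W s).1) (Set.Ico i (i + r)) := by
  by_contra hinj
  obtain ⟨i', j', hi, hj, h'⟩ := exists_isBalanced_lt hW hlevel hinj
  have := hmin i' j' h'
  omega

-- The first return of the letter at `i` must occur at `i + r`: otherwise it would close a balanced
-- segment that misses this letter.
lemma IsBalanced.eq_of_minimal (hW : IsCyclicWord W l) (hlevel : IsUnseparated W l)
    (hmin : ∀ i j, IsBalanced W l i j → i + r ≤ j) {i : ℕ} (h : IsBalanced W l i (i + r)) :
    W i = W (i + r) := by
  classical
  have hinj := injOn_of_minimal hW hlevel hmin i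
  have hmem : (W i).1 ∈ {y | height W (Pi.single y 1) l ≠ 0} :=
    h.image_eq hinj ▸ ⟨i, ⟨le_rfl, h.lt⟩, rfl⟩
  have hex : ∃ q, i < q ∧ (W i).1 = (W q).1 :=
    ⟨i + l, by have := hW.pos; omega, by rw [hW.periodic]⟩
  obtain ⟨hiq, heq⟩ := Nat.find_spec hex
  have hfirst (s : ℕ) (hs : s < Nat.find hex) (his : i < s) : (W s).1 ≠ (W i).1 :=
    fun h => Nat.find_min hex hs ⟨his, h.symm⟩
  set q := Nat.find hex
  have hmiss (p : ℕ) (hp : i < p) : ¬IsBalanced W l p q := fun hb => by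
    obtain ⟨s, hs, hsi⟩ := hb.support_subset hW hlevel hmem
    exact hfirst s hs.2 (hp.trans_le hs.1) hsi
  obtain ⟨hWq, hb⟩ | hb := eq_and_isBalanced_or_isBalanced hW hlevel hiq heq
  · obtain hlt | hge := (hmin i q hb).lt_or_eq
    · exact (hmiss (i + r) h.lt ⟨hlt, fun φ hφ =>
        (h.height_eq φ hφ).symm.trans (hb.height_eq φ hφ)⟩).elim
    · rw [hge, hWq]
  · exact (hmiss (i + 1) i.lt_succ_self hb).elim

lemma IsBalanced.add_of_minimal (hW : IsCyclicWord W l) (hlevel : IsUnseparated W l)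
    (hmin : ∀ i j, IsBalanced W l i j → i + r ≤ j) {i : ℕ} (h : IsBalanced W l i (i + r)) (k : ℕ) :
    IsBalanced W l (i + k) (i + k + r) := by
  induction k with
  | zero => exact h
  | succ k ih =>
    refine ⟨by have := ih.lt; omega, fun φ hφ => ?_⟩
    rw [← add_assoc, add_right_comm _ 1 r, height_succ, height_succ, ih.height_eq φ hφ,
      ih.eq_of_minimal hW hlevel hmin]

theorem IsUnseparated.exists_root (hW : IsCyclicWord W l) (hlevel : IsUnseparated W l) :
    ∃ r, 0 < r ∧ r ∣ l ∧ Periodic W r ∧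
      ∀ i, Set.InjOn (fun s => (W s).1) (Set.Ico i (i + r)) := by
  classical
  have hex : ∃ r i, IsBalanced W l i (i + r) :=
    ⟨l, 0, by simpa using hW.pos, fun φ hφ => by rw [zero_add, hφ, height_zero]⟩
  obtain ⟨i, h⟩ := Nat.find_spec hex
  have hmin (i j : ℕ) (hij : IsBalanced W l i j) : i + Nat.find hex ≤ j := by
    have := Nat.find_min' hex ⟨i, (Nat.add_sub_of_le hij.lt.le).symm ▸ hij⟩
    have := hij.lt
    omega
  set r := Nat.find hex
  have hr : 0 < r := by have := h.lt; omega
  have hper : Periodic W r := fun k => by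
    have hshift (s : ℕ) : W (s + i * l) = W s := hW.periodic.nat_mul i s
    have hki : i + (k + i * l - i) = k + i * l := by have := Nat.le_mul_of_pos_right i hW.pos; omega
    have := (h.add_of_minimal hW hlevel hmin (k + i * l - i)).eq_of_minimal hW hlevel hmin
    rwa [hki, add_right_comm, hshift, hshift, eq_comm] at this
  have hinj := IsBalanced.injOn_of_minimal hW hlevel hmin
  refine ⟨r, hr, ?_, hper, hinj⟩
  have h0 : 0 < 0 + r := by rwa [zero_add]
  have hmod : W (l % r) = W 0 := by rw [hper.map_mod_nat, hW.periodic.eq]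
  exact Nat.dvd_of_mod_eq_zero <| hinj 0 ⟨Nat.zero_le _, by simpa using Nat.mod_lt l hr⟩
    ⟨le_rfl, h0⟩ (congrArg Prod.fst hmod)

end Unseparated

/-! ### Powers of words with distinct letters -/

section OccursOnce

variable {X K : Type*} [Group K] {Y : Set X} {z : X} {q : FreeGroup X}

/-- An element of the free group that is spelled with letters of `Y` except for a single occurrence
of `z` or its inverse. -/
def OccursOnce (Y : Set X) (z : X) (q : FreeGroup X) : Prop :=
  ∃ A ∈ lettersSubgroup Y, ∃ B ∈ lettersSubgroup Y, ∃ b, q = A * FreeGroup.mk [(z, b)] * B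

lemma OccursOnce.mono {Z : Set X} (h : OccursOnce Y z q) (hYZ : Y ⊆ Z) : OccursOnce Z z q := by
  obtain ⟨A, hA, B, hB, b, rfl⟩ := h
  exact ⟨A, lettersSubgroup_mono hYZ hA, B, lettersSubgroup_mono hYZ hB, b, rfl⟩

lemma OccursOnce.inv (h : OccursOnce Y z q) : OccursOnce Y z q⁻¹ := by
  obtain ⟨A, hA, B, hB, b, rfl⟩ := h
  refine ⟨B⁻¹, inv_mem hB, A⁻¹, inv_mem hA, !b, ?_⟩
  rw [mul_inv_rev, mul_inv_rev, mul_assoc]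
  rfl

lemma OccursOnce.mem (h : OccursOnce Y z q) {Z : Set X} (hYZ : Y ⊆ Z) (hz : z ∈ Z) :
    q ∈ lettersSubgroup Z := by
  obtain ⟨A, hA, B, hB, b, rfl⟩ := h
  exact mul_mem (mul_mem (lettersSubgroup_mono hYZ hA) (mk_mem_lettersSubgroup hz))
    (lettersSubgroup_mono hYZ hB)

lemma OccursOnce.of_mul_left (hq : q ∈ lettersSubgroup Y) : OccursOnce Y z (FreeGroup.of z * q) :=
  ⟨1, one_mem _, q, hq, true, by rw [one_mul]; rfl⟩

lemma lift_update_of_mem [DecidableEq X] (θ : FreeGroup X →* K) (hz : z ∉ Y) (k : K)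
    {w : FreeGroup X} (hw : w ∈ lettersSubgroup Y) :
    FreeGroup.lift (Function.update (fun y => θ (FreeGroup.of y)) z k) w = θ w :=
  hom_eq_of_mem_lettersSubgroup (fun _ hy => FreeGroup.lift_apply_of.trans
    (Function.update_of_ne (ne_of_mem_of_not_mem hy hz) ..)) hw

lemma OccursOnce.exists_hom (h : OccursOnce Y z q) (hz : z ∉ Y) (f : X → K) (r : K) :
    ∃ θ : FreeGroup X →* K, (∀ y, y ≠ z → θ (FreeGroup.of y) = f y) ∧ θ q = r := by
  classical
  obtain ⟨A, hA, B, hB, b, rfl⟩ := h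
  let θ₀ : FreeGroup X →* K := FreeGroup.lift f
  let k := (θ₀ A)⁻¹ * r * (θ₀ B)⁻¹
  let θ := FreeGroup.lift
    (Function.update (fun y => θ₀ (FreeGroup.of y)) z (if b then k else k⁻¹))
  have hθA : θ A = θ₀ A := lift_update_of_mem θ₀ hz _ hA
  have hθB : θ B = θ₀ B := lift_update_of_mem θ₀ hz _ hB
  have hθz : θ (FreeGroup.mk [(z, b)]) = k := by
    cases b <;> simp [θ, FreeGroup.lift_mk]
  refine ⟨θ, fun y hy => ?_, ?_⟩
  · simp [θ, θ₀, hy]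
  · rw [map_mul, map_mul, hθA, hθB, hθz]
    simp only [k]
    group

end OccursOnce

section PowerRelator

variable {X : Type*} {rels : Set (FreeGroup X)} {x z : X} {q : FreeGroup X} {N : ℕ}

lemma exists_hom_of_normalClosure_eq {K : Type*} [Group K] {r : FreeGroup X}
    (hrels : Subgroup.normalClosure rels = Subgroup.normalClosure {r})
    {θ : FreeGroup X →* K} (hθ : θ r = 1) :
    ∃ Θ : PresentedGroup rels →* K, ∀ w, Θ (PresentedGroup.mk rels w) = θ w :=
  ⟨QuotientGroup.lift _ θ (hrels.trans_le (Subgroup.normalClosure_le_normal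
    (Set.singleton_subset_iff.2 hθ))), fun _ => rfl⟩

lemma mk_eq_one_of_normalClosure_eq {r : FreeGroup X}
    (hrels : Subgroup.normalClosure rels = Subgroup.normalClosure {r}) :
    PresentedGroup.mk rels r = 1 :=
  (QuotientGroup.eq_one_iff r).2 (hrels ▸ Subgroup.subset_normalClosure rfl)

variable (hrels : Subgroup.normalClosure rels =
  Subgroup.normalClosure {(FreeGroup.of x * q) ^ N})
include hrels

lemma injOn_of_normalClosure_eq (hq : q ∈ lettersSubgroup {x}ᶜ) :
    Set.InjOn (PresentedGroup.mk rels) (lettersSubgroup {x}ᶜ) := by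
  obtain ⟨θ, hθ, hθq⟩ := (OccursOnce.of_mul_left hq).exists_hom (z := x) (by simp) FreeGroup.of 1
  obtain ⟨Θ, hΘ⟩ := exists_hom_of_normalClosure_eq hrels (θ := θ) (by rw [map_pow, hθq, one_pow])
  have hid {w : FreeGroup X} (hw : w ∈ lettersSubgroup {x}ᶜ) : θ w = w :=
    hom_eq_of_mem_lettersSubgroup (ψ := MonoidHom.id _) hθ hw
  intro v hv w hw hvw
  rw [← hid hv, ← hid hw, ← hΘ, ← hΘ, hvw]

omit hrels in
lemma closure_range_eq_top_of_eq_mul {c : X → PresentedGroup rels} (hq : q ∈ lettersSubgroup {x}ᶜ)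
    (hcx : c x = PresentedGroup.mk rels (FreeGroup.of x * q))
    (hc : ∀ y ≠ x, c y = PresentedGroup.of y) : Subgroup.closure (Set.range c) = ⊤ := by
  have hmem (y : X) (hy : y ≠ x) : PresentedGroup.of y ∈ Subgroup.closure (Set.range c) :=
    hc y hy ▸ Subgroup.subset_closure ⟨y, rfl⟩
  have hmemq : PresentedGroup.mk rels q ∈ Subgroup.closure (Set.range c) :=
    (lettersSubgroup_le_iff (M := (Subgroup.closure (Set.range c)).comap _)).2 hmem hq
  rw [← top_le_iff, ← PresentedGroup.closure_range_of rels, Subgroup.closure_le]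
  rintro _ ⟨y, rfl⟩
  obtain hy | hy := eq_or_ne y x
  · have hxq : PresentedGroup.of x * PresentedGroup.mk rels q ∈ Subgroup.closure (Set.range c) :=
      (hcx.trans (map_mul ..)) ▸ Subgroup.subset_closure ⟨x, rfl⟩
    exact hy ▸ (Subgroup.mul_mem_cancel_right _ hmemq).1 hxq
  · exact hmem y hy

-- Trading the generator `x` for `x * q` turns the relator into a power of a generator.
lemma isCyclicBasis_of_normalClosure_eq {c : X → PresentedGroup rels}
    (hq : q ∈ lettersSubgroup {x}ᶜ) (hcx : c x = PresentedGroup.mk rels (FreeGroup.of x * q))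
    (hc : ∀ y ≠ x, c y = PresentedGroup.of y) : IsCyclicBasis c := by
  let s (y : X) : Monoid.CoprodI fun y => Subgroup.zpowers (c y) :=
    Monoid.CoprodI.of ⟨c y, Subgroup.mem_zpowers (c y)⟩
  have hsx : s x ^ N = 1 := by
    have hpow : c x ^ N = 1 := by rw [hcx, ← map_pow, mk_eq_one_of_normalClosure_eq hrels]
    have : (⟨c x, Subgroup.mem_zpowers (c x)⟩ : Subgroup.zpowers (c x)) ^ N = 1 :=
      Subtype.ext hpow
    rw [← map_pow, this, map_one]
  obtain ⟨θ, hθ, hθx⟩ := (OccursOnce.of_mul_left hq).exists_hom (z := x) (by simp) s (s x)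
  obtain ⟨Θ, hΘ⟩ := exists_hom_of_normalClosure_eq hrels (θ := θ) (by rw [map_pow, hθx, hsx])
  refine isCyclicBasis_of_splitting (closure_range_eq_top_of_eq_mul hq hcx hc) Θ fun y => ?_
  change Θ (c y) = s y
  obtain rfl | hy := eq_or_ne y x
  · rw [hcx, hΘ, hθx]
  · rw [hc y hy, ← hθ y hy]
    exact hΘ _

lemma isMalnormal_of_normalClosure_eq (hq : q ∈ lettersSubgroup {x}ᶜ) :
    (magnusSubgroup rels {x}ᶜ).IsMalnormal := by
  classical
  let c : X → PresentedGroup rels :=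
    Function.update PresentedGroup.of x (PresentedGroup.mk rels (FreeGroup.of x * q))
  have hc (y : X) (hy : y ≠ x) : c y = PresentedGroup.of y := Function.update_of_ne hy ..
  have himage : magnusSubgroup rels {x}ᶜ = Subgroup.closure (c '' {x}ᶜ) := by
    rw [magnusSubgroup, lettersSubgroup, MonoidHom.map_closure, Set.image_image]
    exact congrArg _ (Set.image_congr fun y hy => (hc y hy).symm)
  rw [himage]
  exact (isCyclicBasis_of_normalClosure_eq hrels hq (Function.update_self ..)
    hc).isMalnormal_closure_image _

end PowerRelator

section Intersection

variable {X T : Type*}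

/-- The action of permutations of an alphabet on the free group. -/
def permAut (T : Type*) : Equiv.Perm T →* MulAut (FreeGroup T) where
  toFun := FreeGroup.freeGroupCongr
  map_one' := FreeGroup.freeGroupCongr_refl
  map_mul' σ τ := (FreeGroup.freeGroupCongr_trans τ σ).symm

variable {rels : Set (FreeGroup X)} {x z : X} {q : FreeGroup X} {N : ℕ}

lemma inr_inv_mul_inl_of_mul_inr (τ : Equiv.Perm T) (t : T) :
    (SemidirectProduct.inr τ⁻¹ * SemidirectProduct.inl (FreeGroup.of t) * SemidirectProduct.inr τ :
      FreeGroup T ⋊[permAut T] Equiv.Perm T) = SemidirectProduct.inl (FreeGroup.of (τ⁻¹ t)) := by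
  have := SemidirectProduct.inl_aut (φ := permAut T) τ⁻¹ (FreeGroup.of t)
  rw [inv_inv] at this
  exact this.symm

-- The relator `(x q) ^ N` dies both when `x q` is sent to `s` and when, in addition, `x` is
-- conjugated by `s`; the two homomorphisms agree on the letters other than `x` and `z`.
lemma lift_eq_lift_update_conj {K : Type*} [Group K] [DecidableEq X] (f : X → K) {s : K}
    (hs : s ^ N = 1) (hrels : Subgroup.normalClosure rels =
      Subgroup.normalClosure {(FreeGroup.of x * q) ^ N})
    (hxz : x ≠ z) (hq : OccursOnce ({x}ᶜ ∩ {z}ᶜ) z q) {v w : FreeGroup X}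
    (hv : v ∈ lettersSubgroup {x}ᶜ) (hw : w ∈ lettersSubgroup {z}ᶜ)
    (hvw : PresentedGroup.mk rels v = PresentedGroup.mk rels w) :
    FreeGroup.lift f w = FreeGroup.lift (Function.update f x (s⁻¹ * f x * s)) w := by
  obtain ⟨θ₁, hθ₁, hθ₁q⟩ := (hq.mono Set.inter_subset_right).exists_hom (z := z) (by simp) f
    ((f x)⁻¹ * s)
  have hθ₁x := hθ₁ x hxz
  let θ₂ := FreeGroup.lift (Function.update (fun y => θ₁ (FreeGroup.of y)) x (s⁻¹ * f x * s))
  have hθ₂ {u : FreeGroup X} (hu : u ∈ lettersSubgroup {x}ᶜ) : θ₂ u = θ₁ u :=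
    lift_update_of_mem θ₁ (by simp) _ hu
  have hθ₂q := hθ₂ (hq.mem Set.inter_subset_left hxz.symm)
  have hθ₂x : θ₂ (FreeGroup.of x) = s⁻¹ * f x * s := by simp [θ₂]
  have hkill₁ : θ₁ ((FreeGroup.of x * q) ^ N) = 1 := by
    rw [map_pow, map_mul, hθ₁x, hθ₁q, mul_inv_cancel_left, hs]
  have hkill₂ : θ₂ ((FreeGroup.of x * q) ^ N) = 1 := by
    have hconj : θ₂ (FreeGroup.of x * q) = (s⁻¹ * f x) * s * (s⁻¹ * f x)⁻¹ := by
      rw [map_mul, hθ₂x, hθ₂q, hθ₁q]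
      group
    rw [map_pow, hconj, conj_pow, hs, mul_one, mul_inv_cancel]
  obtain ⟨Θ₁, hΘ₁⟩ := exists_hom_of_normalClosure_eq hrels hkill₁
  obtain ⟨Θ₂, hΘ₂⟩ := exists_hom_of_normalClosure_eq hrels hkill₂
  have hθw : θ₁ w = θ₂ w := by rw [← hΘ₁, ← hΘ₂, ← hvw, hΘ₁, hΘ₂, hθ₂ hv]
  have hlift₁ : FreeGroup.lift f w = θ₁ w :=
    hom_eq_of_mem_lettersSubgroup (fun y hy => FreeGroup.lift_apply_of.trans (hθ₁ y hy).symm) hw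
  have hlift₂ : FreeGroup.lift (Function.update f x (s⁻¹ * f x * s)) w = θ₂ w := by
    refine hom_eq_of_mem_lettersSubgroup (fun y hy => ?_) hw
    obtain rfl | hyx := eq_or_ne y x
    · simp [θ₂]
    · simp [θ₂, hyx, hθ₁ y hy]
  rw [hlift₁, hθw, hlift₂]

lemma map_mem_lettersSubgroup_range (f : X → T) (w : FreeGroup X) :
    FreeGroup.map f w ∈ lettersSubgroup (Set.range f) := by
  rw [← Set.image_univ, ← map_lettersSubgroup]
  refine ⟨w, ?_, rfl⟩
  rw [lettersSubgroup, Set.image_univ, FreeGroup.closure_range_of]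
  exact Subgroup.mem_top w

lemma mem_lettersSubgroup_compl_of_map_eq [DecidableEq X] {f : X → T} (hf : Function.Injective f)
    {t : T} (ht : t ∉ Set.range f) {w : FreeGroup X}
    (h : FreeGroup.map f w = FreeGroup.map (Function.update f x t) w) :
    w ∈ lettersSubgroup {x}ᶜ := by
  have hmem := lettersSubgroup_inf_le _ _ ⟨map_mem_lettersSubgroup_range f w,
    h ▸ map_mem_lettersSubgroup_range (Function.update f x t) w⟩
  have hsubset : Set.range f ∩ Set.range (Function.update f x t) ⊆ f '' {x}ᶜ := by
    rintro _ ⟨⟨y, rfl⟩, y', hy'⟩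
    obtain rfl | hne := eq_or_ne y' x
    · exact absurd ⟨y, ((Function.update_self ..).symm.trans hy').symm⟩ ht
    · exact ⟨y', hne, (Function.update_of_ne hne ..).symm.trans hy'⟩
  have := lettersSubgroup_mono hsubset hmem
  rw [← map_lettersSubgroup] at this
  exact (Subgroup.mem_map_iff_mem (FreeGroup.map_injective hf)).1 this

/-- The cyclic shift of the second coordinate. -/
def cyclicShift (X : Type*) (N : ℕ) : Equiv.Perm (X × ZMod N) :=
  (Equiv.refl X).prodCongr (Equiv.addRight 1)

lemma cyclicShift_pow_self (X : Type*) (N : ℕ) : cyclicShift X N ^ N = 1 := by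
  have hpow (k : ℕ) (p : X × ZMod N) : (cyclicShift X N ^ k) p = (p.1, p.2 + k) := by
    induction k with
    | zero => simp
    | succ k ih =>
      rw [pow_succ', Equiv.Perm.mul_apply, ih, Nat.cast_succ, ← add_assoc]
      rfl
  ext1 p
  rw [hpow, CharP.cast_eq_zero, add_zero]
  rfl

-- In a free group on `N` disjoint copies of the letters, cyclically permuted by an element `s`
-- of order `N`, conjugation by `s` moves `x` to a letter that does not occur in the copy at `0`.
lemma inf_le_of_normalClosure_eq (hN : 2 ≤ N) (hrels : Subgroup.normalClosure rels =
      Subgroup.normalClosure {(FreeGroup.of x * q) ^ N})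
    (hxz : x ≠ z) (hq : OccursOnce ({x}ᶜ ∩ {z}ᶜ) z q) :
    magnusSubgroup rels {x}ᶜ ⊓ magnusSubgroup rels {z}ᶜ ≤ magnusSubgroup rels ({x}ᶜ ∩ {z}ᶜ) := by
  classical
  rintro _ ⟨⟨v, hv, rfl⟩, ⟨w, hw, hwv⟩⟩
  suffices hwx : w ∈ lettersSubgroup {x}ᶜ by
    rw [← hwv]
    exact mk_mem_magnusSubgroup (lettersSubgroup_inf_le _ _ ⟨hwx, hw⟩)
  let τ := cyclicShift X N
  let copy (y : X) : X × ZMod N := (y, 0)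
  refine mem_lettersSubgroup_compl_of_map_eq (f := copy) (fun _ _ h => congrArg Prod.fst h)
    (t := τ⁻¹ (copy x)) ?_ ?_
  · have : Fact (1 < N) := ⟨hN⟩
    rintro ⟨y, hy⟩
    have hzero : (0 : ZMod N) = 0 + -1 := congrArg Prod.snd hy
    simp at hzero
  · apply SemidirectProduct.inl_injective (φ := permAut (X × ZMod N))
    have hlift := lift_eq_lift_update_conj
      (fun y => SemidirectProduct.inl (φ := permAut (X × ZMod N)) (FreeGroup.of (copy y)))
      (s := SemidirectProduct.inr τ) (by rw [← map_pow, cyclicShift_pow_self, map_one])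
      hrels hxz hq hv hw hwv.symm
    rw [← map_inv, inr_inv_mul_inl_of_mul_inr] at hlift
    convert hlift using 1 <;>
      refine FreeGroup.lift_unique (SemidirectProduct.inl.comp (FreeGroup.map _)) fun y => ?_
    · simp
    · obtain rfl | hy := eq_or_ne y x <;> simp [*]

end Intersection

section DistinctLetters

variable {X : Type*} {W : ℕ → X × Bool} {l : ℕ}

lemma occursOnce_initialWord {Y : Set X} {j : ℕ} (hj : j < l)
    (hY : ∀ i < l, i ≠ j → (W i).1 ∈ Y) : OccursOnce Y (W j).1 (initialWord W l) := by
  refine ⟨initialWord W j, initialWord_mem_lettersSubgroup fun i hi => hY i (hi.trans hj) hi.ne,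
    initialWord (fun s => W (j + 1 + s)) (l - (j + 1)),
    initialWord_mem_lettersSubgroup fun i hi => hY (j + 1 + i) (by omega) (by omega),
    (W j).2, ?_⟩
  rw [← initialWord_succ, ← initialWord_add]
  congr 1
  omega

lemma normalClosure_singleton_eq_of_isConj {G : Type*} [Group G] {g h : G} (hgh : IsConj g h) :
    Subgroup.normalClosure {g} = Subgroup.normalClosure {h} := by
  simp only [Subgroup.normalClosure, Group.conjugatesOfSet, Set.biUnion_singleton,
    hgh.conjugatesOf_eq]

lemma normalClosure_singleton_inv {G : Type*} [Group G] (g : G) :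
    Subgroup.normalClosure {g⁻¹} = Subgroup.normalClosure {g} := by
  have hle (h : G) : Subgroup.normalClosure {h⁻¹} ≤ Subgroup.normalClosure {h} :=
    Subgroup.normalClosure_le_normal
      (Set.singleton_subset_iff.2 (inv_mem (Subgroup.subset_normalClosure rfl)))
  exact le_antisymm (hle g) (by simpa using hle g⁻¹)

lemma isConj_initialWord (hW : Function.Periodic W l) (i : ℕ) :
    IsConj (initialWord W l) (initialWord (fun s => W (i + s)) l) := by
  have hshift : (fun s => W (l + s)) = W := funext fun s => by rw [add_comm, hW]
  have hcomm := (initialWord_add W i l).symm.trans (add_comm i l ▸ initialWord_add W l i)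
  rw [hshift] at hcomm
  refine isConj_iff.2 ⟨(initialWord W i)⁻¹, ?_⟩
  rw [inv_inv, mul_assoc, ← hcomm, inv_mul_cancel_left]

lemma wordLetters_shift (hl : 0 < l) (hW : Function.Periodic W l) (i : ℕ) :
    wordLetters (fun s => W (i + s)) = wordLetters W := by
  refine Set.Subset.antisymm (Set.range_subset_iff.2 fun s => ⟨i + s, rfl⟩) ?_
  rintro _ ⟨k, rfl⟩
  have hk : i + (k + i * l - i) = k + i * l := by have := Nat.le_mul_of_pos_right i hl; omega
  refine ⟨k + i * l - i, ?_⟩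
  simp only [hk]
  exact congrArg Prod.fst (hW.nat_mul i k)

lemma exists_normalClosure_eq_of_injOn (hl : 0 < l)
    (hinj : Set.InjOn (fun s => (W s).1) (Set.Iio l)) (n : ℕ) :
    ∃ q ∈ lettersSubgroup {(W 0).1}ᶜ,
      (∀ j < l, j ≠ 0 → OccursOnce ({(W 0).1}ᶜ ∩ {(W j).1}ᶜ) (W j).1 q) ∧
      Subgroup.normalClosure {initialWord W l ^ n} =
        Subgroup.normalClosure {(FreeGroup.of (W 0).1 * q) ^ n} := by
  obtain ⟨k, rfl⟩ := Nat.exists_eq_add_of_lt hl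
  rw [zero_add, add_comm k 1] at hinj ⊢
  set q := initialWord (fun s => W (1 + s)) k
  have hne {i j : ℕ} (hi : i < 1 + k) (hj : j < 1 + k) (hij : i ≠ j) : (W i).1 ≠ (W j).1 :=
    fun h => hij (hinj hi hj h)
  have hq : q ∈ lettersSubgroup {(W 0).1}ᶜ :=
    initialWord_mem_lettersSubgroup fun i hi => hne (by omega) (by omega) (by omega)
  have hocc (j : ℕ) (hj : j < 1 + k) (hj0 : j ≠ 0) :
      OccursOnce ({(W 0).1}ᶜ ∩ {(W j).1}ᶜ) (W j).1 q := by
    obtain ⟨j, rfl⟩ := Nat.exists_eq_add_of_le (Nat.one_le_iff_ne_zero.2 hj0)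
    exact occursOnce_initialWord (W := fun s => W (1 + s)) (by omega) fun i hi hij =>
      ⟨hne (by omega) (by omega) (by omega), hne (by omega) (by omega) (by omega)⟩
  have hword : initialWord W (1 + k) = FreeGroup.mk [W 0] * q := initialWord_add W 1 k
  rcases hW0 : W 0 with ⟨x, b⟩
  rw [hW0] at hq hword
  cases b with
  | true => exact ⟨q, hq, by simpa only [hW0] using hocc, by rw [hword]; rfl⟩
  | false =>
    refine ⟨q⁻¹, inv_mem hq, fun j hj hj0 => hW0 ▸ (hocc j hj hj0).inv, ?_⟩
    have hinv : (initialWord W (1 + k))⁻¹ = q⁻¹ * FreeGroup.of x := by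
      rw [hword, mul_inv_rev]
      rfl
    rw [← normalClosure_singleton_inv, ← inv_pow, hinv]
    exact normalClosure_singleton_eq_of_isConj (IsConj.pow n (isConj_iff.2 ⟨q, by group⟩))

theorem isMagnus_of_injOn {n : ℕ} (hn : 2 ≤ n) (hl : 0 < l) (hW : Function.Periodic W l)
    (hinj : ∀ i, Set.InjOn (fun s => (W s).1) (Set.Ico i (i + l))) :
    IsMagnus {initialWord W l ^ n} (wordLetters W) := by
  have hlinear (x : X) (hx : x ∈ wordLetters W) : ∃ q ∈ lettersSubgroup {x}ᶜ,
      (∀ z ∈ wordLetters W, x ≠ z → OccursOnce ({x}ᶜ ∩ {z}ᶜ) z q) ∧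
      Subgroup.normalClosure {initialWord W l ^ n} =
        Subgroup.normalClosure {(FreeGroup.of x * q) ^ n} := by
    obtain ⟨i, rfl⟩ := hx
    obtain ⟨q, hq, hocc, hrels⟩ := exists_normalClosure_eq_of_injOn (W := fun s => W (i + s)) hl
      (fun s hs t ht h => Nat.add_left_cancel
        (hinj i ⟨by omega, Nat.add_lt_add_left hs i⟩ ⟨by omega, Nat.add_lt_add_left ht i⟩ h)) n
    refine ⟨q, hq, fun z hz hxz => ?_, ?_⟩
    · rw [← wordLetters_shift hl hW i, wordLetters_eq_image hl (hW.const_add i)] at hz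
      obtain ⟨j, hj, rfl⟩ := hz
      exact hocc j hj fun hj0 => hxz (by rw [hj0]; rfl)
    · exact (normalClosure_singleton_eq_of_isConj (IsConj.pow n (isConj_initialWord hW i))).trans
        hrels
  refine .of_compl_singleton (fun x hx => ?_) (fun x hx => ?_) fun x hx z hz hxz => ?_ <;>
    obtain ⟨q, hq, hocc, hrels⟩ := hlinear x hx
  · exact injOn_of_normalClosure_eq hrels hq
  · exact isMalnormal_of_normalClosure_eq hrels hq
  · exact inf_le_of_normalClosure_eq hn hrels hxz (hocc z hz hxz)

end DistinctLetters

/-! ### Powers of cyclic words -/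

section MagnusInduction

lemma levelLift_pow_initialWord {X : Type*} {W : ℕ → X × Bool} {l : ℕ} {φ : X → ℤ}
    (hφ : height W φ l = 0) (n : ℕ) :
    levelLift φ (initialWord W l ^ n) =
      SemidirectProduct.inl (initialWord (levelWord W φ) l ^ n) := by
  rw [map_pow, levelLift_initialWord, hφ, map_pow]
  rfl

-- The separated case increases the number of letters, which is bounded by the length `l`.
theorem IsCyclicWord.isMagnus {X : Type*} {W : ℕ → X × Bool} {l n : ℕ} (hW : IsCyclicWord W l)
    (hn : 2 ≤ n) : IsMagnus {initialWord W l ^ n} (wordLetters W) := by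
  by_cases hlevel : IsUnseparated W l
  · obtain ⟨r, hr, ⟨k, rfl⟩, hper, hinj⟩ := hlevel.exists_root hW
    have hk : 0 < k := Nat.pos_of_mul_pos_left hW.pos
    rw [initialWord_mul_of_periodic hper, ← pow_mul]
    exact isMagnus_of_injOn (hn.trans (Nat.le_mul_of_pos_left n hk)) hr hper hinj
  · simp only [IsUnseparated, not_forall] at hlevel
    obtain ⟨φ, hφ, i, j, hij, hne⟩ := hlevel
    have hlt := ncard_wordLetters_lt_levelWord hW hφ hij hne
    have hW' := isCyclicWord_levelWord hW hφ
    have hle := ncard_wordLetters_le hW'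
    have hpow := levelLift_pow_initialWord hφ n
    have hrels : levelRels φ {initialWord W l ^ n} = {initialWord (levelWord W φ) l ^ n} := by
      rw [levelRels, Set.image_singleton, hpow, SemidirectProduct.left_inl]
    rw [← image_fst_wordLetters_levelWord W φ]
    refine .of_levelRels (φ := φ) (hrels ▸ hW'.isMagnus hn) ?_ (finite_wordLetters hW') ?_
    · rintro _ rfl
      rw [hpow, SemidirectProduct.right_inl]
    · rw [hrels, Set.singleton_subset_iff]
      exact pow_mem (initialWord_mem_lettersSubgroup fun i _ => Set.mem_range_self i) n
termination_by l - (wordLetters W).ncard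
decreasing_by exact Nat.sub_lt_sub_left (hlt.trans_le hle) hlt

end MagnusInduction

section Malnormal

variable {X : Type*}

lemma getElem_eq_of_isCyclicallyReduced {L : List (X × Bool)}
    (hL : FreeGroup.IsCyclicallyReduced L) {i : ℕ} (hi : i < L.length)
    (h : L[i].1 = (L[(i + 1) % L.length]'(Nat.mod_lt _ (by omega))).1) :
    L[i].2 = (L[(i + 1) % L.length]'(Nat.mod_lt _ (by omega))).2 := by
  obtain hi' | hi' := Nat.lt_or_eq_of_le (Nat.succ_le_of_lt hi)
  · simp only [Nat.mod_eq_of_lt hi'] at h ⊢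
    exact List.isChain_iff_getElem.1 hL.1 i hi' h
  · have hi0 : (i + 1) % L.length = 0 := by rw [← hi', Nat.succ_eq_add_one, Nat.mod_self]
    simp only [hi0] at h ⊢
    refine hL.2 _ ?_ _ ?_ h
    · rw [List.getLast?_eq_getElem?, ← hi', Nat.succ_sub_one, List.getElem?_eq_getElem hi]
      rfl
    · rw [List.head?_eq_getElem?, List.getElem?_eq_getElem]
      rfl

lemma exists_isCyclicWord_of_isCyclicallyReduced {L : List (X × Bool)}
    (hL : FreeGroup.IsCyclicallyReduced L) (hne : L ≠ []) :
    ∃ W, IsCyclicWord W L.length ∧ initialWord W L.length = FreeGroup.mk L := by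
  have hpos : 0 < L.length := List.length_pos_of_ne_nil hne
  refine ⟨fun i => L[i % L.length]'(Nat.mod_lt i hpos), ⟨hpos, fun i => ?_, fun i h => ?_⟩, ?_⟩
  · simp only [Nat.add_mod_right]
  · simp only [Nat.add_mod i 1] at h ⊢
    simp only [← Nat.add_mod, ← Nat.mod_add_mod i] at h ⊢
    exact getElem_eq_of_isCyclicallyReduced hL (Nat.mod_lt i hpos) h
  · refine congrArg FreeGroup.mk (List.ext_getElem (by simp) fun i hi hi' => ?_)
    simp [Nat.mod_eq_of_lt hi']

lemma exists_isCyclicWord {w : FreeGroup X} (hw : w ≠ 1) :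
    ∃ W l, IsCyclicWord W l ∧ IsConj w (initialWord W l) := by
  classical
  let L := FreeGroup.reduceCyclically w.toWord
  let C := FreeGroup.mk (FreeGroup.reduceCyclically.conjugator w.toWord)
  have hconj : C * FreeGroup.mk L * C⁻¹ = w := by
    rw [FreeGroup.inv_mk, FreeGroup.mul_mk, FreeGroup.mul_mk,
      FreeGroup.reduceCyclically.conj_conjugator_reduceCyclically, FreeGroup.mk_toWord]
  have hne : L ≠ [] := by
    intro hL
    rw [hL, ← FreeGroup.one_eq_mk, mul_one, mul_inv_cancel] at hconj
    exact hw hconj.symm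
  obtain ⟨W, hW, hWL⟩ := exists_isCyclicWord_of_isCyclicallyReduced
    (FreeGroup.reduceCyclically.isCyclicallyReduced FreeGroup.isReduced_toWord) hne
  exact ⟨W, _, hW, hWL ▸ (isConj_iff.2 ⟨C, hconj⟩).symm⟩

lemma magnusSubgroup_singleton (rels : Set (FreeGroup X)) (x : X) :
    magnusSubgroup rels {x} = Subgroup.zpowers (PresentedGroup.of x) := by
  rw [magnusSubgroup, lettersSubgroup, Set.image_singleton, ← Subgroup.zpowers_eq_closure,
    MonoidHom.map_zpowers]
  rfl

lemma isMalnormal_magnusSubgroup_of_normalClosure_eq {rels rels' : Set (FreeGroup X)}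
    (h : Subgroup.normalClosure rels = Subgroup.normalClosure rels') {Y : Set X}
    (hY : (magnusSubgroup rels Y).IsMalnormal) : (magnusSubgroup rels' Y).IsMalnormal := by
  let e : PresentedGroup rels ≃* PresentedGroup rels' := QuotientGroup.quotientMulEquivOfEq h
  have hmap : (magnusSubgroup rels Y).map e.toMonoidHom = magnusSubgroup rels' Y := by
    rw [magnusSubgroup, Subgroup.map_map]
    rfl
  exact hmap ▸ isMalnormal_map_equiv e hY

-- A relator in `⟨x⟩` only changes the order of one free factor.
lemma isMalnormal_magnusSubgroup_singleton_of_mem {rels : Set (FreeGroup X)} {x : X}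
    (hrels : rels ⊆ lettersSubgroup {x}) : (magnusSubgroup rels {x}).IsMalnormal := by
  let s (y : X) : Monoid.CoprodI fun y => Subgroup.zpowers (PresentedGroup.of (rels := rels) y) :=
    Monoid.CoprodI.of ⟨PresentedGroup.of y, Subgroup.mem_zpowers _⟩
  have hkill : ∀ r ∈ rels, FreeGroup.lift s r = 1 := by
    intro r hr
    have hrx := hrels hr
    rw [SetLike.mem_coe, lettersSubgroup, Set.image_singleton,
      ← Subgroup.zpowers_eq_closure] at hrx
    obtain ⟨k, rfl⟩ := hrx
    have hpow : PresentedGroup.of (rels := rels) x ^ k = 1 :=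
      (map_zpow ..).symm.trans (PresentedGroup.one_of_mem hr)
    have hsub : (⟨PresentedGroup.of x, Subgroup.mem_zpowers _⟩ :
        Subgroup.zpowers (PresentedGroup.of (rels := rels) x)) ^ k = 1 := Subtype.ext hpow
    simp only [map_zpow, FreeGroup.lift_apply_of, s]
    rw [← map_zpow, hsub, map_one]
  have hbasis : IsCyclicBasis (PresentedGroup.of (rels := rels)) :=
    isCyclicBasis_of_splitting (PresentedGroup.closure_range_of rels)
      (PresentedGroup.toGroup hkill) fun y => PresentedGroup.toGroup.of hkill
  have himage : magnusSubgroup rels {x} = Subgroup.closure (PresentedGroup.of '' {x}) := by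
    rw [magnusSubgroup_singleton, Set.image_singleton, Subgroup.zpowers_eq_closure]
  exact himage ▸ hbasis.isMalnormal_closure_image _

end Malnormal

end OneRelator

open OneRelator in
theorem statement_5_general {X : Type*} (R : FreeGroup X) {n : ℕ} (hn : 1 < n) (x : X) :
    (Subgroup.zpowers (PresentedGroup.of (rels := {R ^ n}) x)).IsMalnormal := by
  rw [← magnusSubgroup_singleton]
  obtain rfl | hR := eq_or_ne R 1
  · exact isMalnormal_magnusSubgroup_singleton_of_mem
      (Set.singleton_subset_iff.2 (pow_mem (one_mem _) n))
  obtain ⟨W, l, hW, hconj⟩ := exists_isCyclicWord hR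
  refine isMalnormal_magnusSubgroup_of_normalClosure_eq
    (normalClosure_singleton_eq_of_isConj (hconj.pow n)).symm ?_
  by_cases hx : wordLetters W ⊆ {x}
  · exact isMalnormal_magnusSubgroup_singleton_of_mem (Set.singleton_subset_iff.2
      (pow_mem (initialWord_mem_lettersSubgroup fun i _ => hx ⟨i, rfl⟩) n))
  · exact (hW.isMagnus hn).isMalnormal hx

/-- B. B. Newman.  In a two-generator one-relator group with torsion
`G = ⟨a, b; Rⁿ⟩`, the cyclic subgroups generated by the images of the two generators
are malnormal. -/
theorem statement_5 {X : Type} (a b : X) (hab : a ≠ b) (hX : ∀ x : X, x = a ∨ x = b)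
    (R : FreeGroup X) (n : ℕ) (hn : 1 < n)
    (hR : ∀ (S : FreeGroup X) (k : ℕ), 1 ≤ k → R = S ^ k → k = 1) :
    (Subgroup.zpowers (PresentedGroup.of (rels := {R ^ n}) a)).IsMalnormal ∧
      (Subgroup.zpowers (PresentedGroup.of (rels := {R ^ n}) b)).IsMalnormal :=
  ⟨statement_5_general R hn a, statement_5_general R hn b⟩
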